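/- For any positive integers r and n, the quotient of Hom_+(C_{2r+1}, K_n) by the Z_2-action induced from the reflection of C_{2r+1} is homotopy equivalent to: a wedge of 2^{n−1} spheres S^{nk−1} if 2r + 1 = 3k; and the join S^{kn/2−1} * RP^{kn/2−1} if 2r + 1 = 3k ± 1 (in which case k is such that kn is even in the relevant cases). -/

import Mathlib

open Finset

noncomputable section
namespace Lovasz




structure Graph where
  V : Type
  fintypeV : Fintype V
  adj : V → V → Prop
  symm : ∀ {x y : V}, adj x y → adj y x

attribute [instance] Graph.fintypeV

def Graph.Loopless (G : Graph) : Prop := ∀ v : G.V, ¬ G.adj v v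

def GraphHom (G H : Graph) : Type :=
  {f : G.V → H.V // ∀ x y : G.V, G.adj x y → H.adj (f x) (f y)}

@[reducible] def completeGraph (n : ℕ) : Graph where
  V := Fin n
  fintypeV := inferInstance
  adj x y := x ≠ y
  symm h := h.symm

def chromaticNumber (G : Graph) : ℕ :=
  sInf {n : ℕ | Nonempty (GraphHom G (completeGraph n))}

@[reducible] def oddCycle (r : ℕ) : Graph where
  V := ZMod (2 * r + 1)
  fintypeV := inferInstance
  adj x y := x = y + 1 ∨ y = x + 1
  symm h := h.symm

/-- The cycle with `m` vertices (trivial graph for `m = 0`). -/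
@[reducible] def cycleGraph : ℕ → Graph
  | 0 => ⟨Empty, inferInstance, fun _ _ => False, fun h => h⟩
  | (n+1) =>
    { V := ZMod (n+1)
      fintypeV := inferInstance
      adj := fun x y => x = y + 1 ∨ y = x + 1
      symm := fun h => h.symm }

/-- The geometric realization of the polyhedral complex `Hom(G,H)`: the space of functions
assigning to each vertex of `G` a probability distribution on `V(H)`, such that any choice of
vertices from the supports yields a graph homomorphism. -/
abbrev HomComplex (G H : Graph) : Type :=
  {f : G.V → H.V → ℝ //
    (∀ v w, 0 ≤ f v w) ∧ (∀ v, ∑ w, f v w = 1) ∧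
    ∀ x y : G.V, G.adj x y → ∀ a b : H.V, f x a ≠ 0 → f y b ≠ 0 → H.adj a b}

/-- The geometric realization of the simplicial complex `Hom₊(G,H)`. -/
abbrev HomPlus (G H : Graph) : Type :=
  {f : G.V → H.V → ℝ //
    (∀ v w, 0 ≤ f v w) ∧ (∑ v, ∑ w, f v w = 1) ∧
    ∀ x y : G.V, G.adj x y → ∀ a b : H.V, f x a ≠ 0 → f y b ≠ 0 → H.adj a b}

/-- The geometric realization of the independence complex `Ind(G)`. -/
abbrev IndSpace (G : Graph) : Type :=
  {f : G.V → ℝ //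
    (∀ v, 0 ≤ f v) ∧ (∑ v, f v = 1) ∧
    ∀ x y : G.V, G.adj x y → f x = 0 ∨ f y = 0}

/-- The map `Hom(G',H) → Hom(G,H)` induced by a graph homomorphism `ι : G → G'`. -/
def precompHom {G G' : Graph} (ι : GraphHom G G') (H : Graph) :
    C(HomComplex G' H, HomComplex G H) where
  toFun f := ⟨fun v w => f.1 (ι.1 v) w,
    fun v w => f.2.1 (ι.1 v) w,
    fun v => f.2.2.1 (ι.1 v),
    fun x y h a b ha hb => f.2.2.2 (ι.1 x) (ι.1 y) (ι.2 x y h) a b ha hb⟩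
  continuous_toFun := by
    apply Continuous.subtype_mk
    apply continuous_pi; intro v
    apply continuous_pi; intro w
    exact (continuous_apply w).comp ((continuous_apply (ι.1 v)).comp continuous_subtype_val)

/-- The map `Hom₊(G',H) → Hom₊(G,H)` induced by an *invertible* graph homomorphism is only used
for involutions, where precomposition preserves the normalization; for bijective `ι` the total
sum is preserved. -/
def precompHomPlus {G : Graph} (ι : GraphHom G G) (hbij : Function.Bijective ι.1) (H : Graph) :
    C(HomPlus G H, HomPlus G H) where
  toFun f := ⟨fun v w => f.1 (ι.1 v) w,
    fun v w => f.2.1 (ι.1 v) w,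
    by
      show ∑ v, ∑ w, f.1 (ι.1 v) w = 1
      have h2 : ∑ v, ∑ w, f.1 (ι.1 v) w = ∑ v, ∑ w, f.1 v w :=
        Fintype.sum_bijective ι.1 hbij _ _ (fun v => rfl)
      rw [h2]; exact f.2.2.1,
    fun x y h a b ha hb => f.2.2.2 (ι.1 x) (ι.1 y) (ι.2 x y h) a b ha hb⟩
  continuous_toFun := by
    apply Continuous.subtype_mk
    apply continuous_pi; intro v
    apply continuous_pi; intro w
    exact (continuous_apply w).comp ((continuous_apply (ι.1 v)).comp continuous_subtype_val)

lemma precompHom_invol {G : Graph} (γ : GraphHom G G) (hγ : ∀ v, γ.1 (γ.1 v) = v) (H : Graph) :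
    ∀ f, precompHom γ H (precompHom γ H f) = f := by
  intro f
  apply Subtype.ext
  funext v w
  show f.1 (γ.1 (γ.1 v)) w = f.1 v w
  rw [hγ]

lemma precompHomPlus_invol {G : Graph} (γ : GraphHom G G) (hbij : Function.Bijective γ.1)
    (hγ : ∀ v, γ.1 (γ.1 v) = v) (H : Graph) :
    ∀ f, precompHomPlus γ hbij H (precompHomPlus γ hbij H f) = f := by
  intro f
  apply Subtype.ext
  funext v w
  show f.1 (γ.1 (γ.1 v)) w = f.1 v w
  rw [hγ]

/-- The reflection `x ↦ -x` of the odd cycle. -/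
def cycleReflect (r : ℕ) : GraphHom (oddCycle r) (oddCycle r) :=
  ⟨fun x => (-x : ZMod (2 * r + 1)), by
    intro x y h
    change (x : ZMod (2 * r + 1)) = y + 1 ∨ y = x + 1 at h
    change (-x : ZMod (2 * r + 1)) = -y + 1 ∨ (-y : ZMod (2 * r + 1)) = -x + 1
    rcases h with h | h
    · right; rw [h]; ring
    · left; rw [h]; ring⟩

lemma cycleReflect_invol (r : ℕ) : ∀ v, (cycleReflect r).1 ((cycleReflect r).1 v) = v :=
  fun v => neg_neg (v : ZMod (2 * r + 1))

lemma cycleReflect_bijective (r : ℕ) : Function.Bijective (cycleReflect r).1 :=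
  Function.Involutive.bijective (fun v => neg_neg (v : ZMod (2 * r + 1)))

open scoped Topology in
/-- `k`-connectedness (`k ≥ -1`): nonempty, path-connected (when `k ≥ 0`), and all homotopy
groups `π_i` vanish for `1 ≤ i ≤ k`. -/
def KConnected (k : ℤ) (X : Type) [TopologicalSpace X] : Prop :=
  Nonempty X ∧ ((0:ℤ) ≤ k → PathConnectedSpace X) ∧
    ∀ i : ℕ, 1 ≤ i → (i : ℤ) ≤ k → ∀ x : X, Subsingleton (HomotopyGroup (Fin i) X x)



/-- The orbit setoid of an involution. -/
def involutionSetoid {X : Type} [TopologicalSpace X] (τ : C(X, X)) (hτ : ∀ x, τ (τ x) = x) : Setoid X where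
  r x y := y = x ∨ y = τ x
  iseqv := by
    constructor
    · exact fun x => Or.inl rfl
    · rintro x y (rfl | rfl)
      · exact Or.inl rfl
      · exact Or.inr (hτ x).symm
    · rintro x y z (rfl | rfl) (h | h) <;> subst h
      · exact Or.inl rfl
      · exact Or.inr rfl
      · exact Or.inr rfl
      · exact Or.inl (hτ x)

/-- The quotient of a space by (the `ℤ/2`-action generated by) an involution. -/
abbrev Z2Quotient (X : Type) [TopologicalSpace X] (τ : C(X, X)) (hτ : ∀ x, τ (τ x) = x) : Type :=
  Quotient (involutionSetoid τ hτ)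

instance fact_one_le_two_ennreal' : Fact ((1 : ENNReal) ≤ 2) := ⟨one_le_two⟩

/-- The infinite-dimensional sphere: the unit sphere of `ℓ²(ℕ;ℝ)`, a model for `E ℤ/2 = S^∞`. -/
abbrev InfSphere : Type := (Metric.sphere (0 : lp (fun _ : ℕ => ℝ) 2) 1 : Set (lp (fun _ : ℕ => ℝ) 2))

/-- The antipodal involution of `S^∞`. -/
def infSphereNeg : C(InfSphere, InfSphere) where
  toFun x := ⟨-x.1, by
    have hx := x.2
    rw [Metric.mem_sphere, dist_zero_right] at hx ⊢
    rwa [norm_neg]⟩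
  continuous_toFun := by
    apply Continuous.subtype_mk
    exact continuous_subtype_val.neg

lemma infSphereNeg_invol : ∀ x, infSphereNeg (infSphereNeg x) = x := by
  intro x
  apply Subtype.ext
  show -(-x.1) = x.1
  exact neg_neg _

/-- `ℝP^∞`, as the quotient of `S^∞` by the antipodal action; a model for `B ℤ/2`. -/
abbrev RPinf : Type := Z2Quotient InfSphere infSphereNeg infSphereNeg_invol

/-- The map `X/ℤ₂ → ℝP^∞` induced by a `ℤ/2`-equivariant (classifying) map `X → S^∞`. -/
def classifyingQuotientMap {X : Type} [TopologicalSpace X] (τ : C(X, X)) (hτ : ∀ x, τ (τ x) = x)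
    (w : C(X, InfSphere)) (hw : ∀ x, w (τ x) = infSphereNeg (w x)) :
    C(Z2Quotient X τ hτ, RPinf) where
  toFun := Quotient.lift (fun x => (Quotient.mk (involutionSetoid infSphereNeg infSphereNeg_invol) (w x) : RPinf))
    (by
      rintro x y (rfl | rfl)
      · rfl
      · show Quotient.mk _ (w x) = Quotient.mk _ (w (τ x))
        rw [hw x]
        exact Quotient.sound (Or.inr rfl))
  continuous_toFun := by
    apply Continuous.quotient_lift
    exact continuous_quotient_mk'.comp w.continuous



/-- The `d`-dimensional sphere, as the unit sphere in `ℝ^{d+1}`. -/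
abbrev nSphere (d : ℕ) : Type :=
  (Metric.sphere (0 : EuclideanSpace ℝ (Fin (d+1))) 1 : Set (EuclideanSpace ℝ (Fin (d+1))))

/-- The antipodal involution of the `d`-sphere. -/
def nSphereNeg (d : ℕ) : C(nSphere d, nSphere d) where
  toFun x := ⟨-x.1, by
    have hx := x.2
    rw [Metric.mem_sphere, dist_zero_right] at hx ⊢
    rwa [norm_neg]⟩
  continuous_toFun := by
    apply Continuous.subtype_mk
    exact continuous_subtype_val.neg

lemma nSphereNeg_invol (d : ℕ) : ∀ x, nSphereNeg d (nSphereNeg d x) = x := by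
  intro x
  apply Subtype.ext
  show -(-x.1) = x.1
  exact neg_neg _

/-- A base point on the `d`-sphere. -/
def northPole (d : ℕ) : nSphere d :=
  ⟨EuclideanSpace.single (0 : Fin (d+1)) (1 : ℝ), by
    rw [Metric.mem_sphere, dist_zero_right, EuclideanSpace.norm_single]
    norm_num⟩

/-- The setoid gluing `m` spheres of dimension `d` at their base points. -/
def wedgeSetoid (m d : ℕ) : Setoid (Fin m × nSphere d) where
  r a b := a = b ∨ (a.2 = northPole d ∧ b.2 = northPole d)
  iseqv := by
    constructor
    · exact fun a => Or.inl rfl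
    · rintro a b (rfl | ⟨h1, h2⟩)
      · exact Or.inl rfl
      · exact Or.inr ⟨h2, h1⟩
    · rintro a b c (rfl | ⟨h1, h2⟩) (rfl | ⟨h3, h4⟩)
      · exact Or.inl rfl
      · exact Or.inr ⟨h3, h4⟩
      · exact Or.inr ⟨h1, h2⟩
      · exact Or.inr ⟨h1, h4⟩

/-- The wedge (one-point union) of `m` copies of the `d`-sphere. -/
abbrev WedgeOfSpheres (m d : ℕ) : Type := Quotient (wedgeSetoid m d)

/-- The setoid for the topological join `X * Y` on `X × Y × [0,1]`:
at time `0` collapse `Y`, at time `1` collapse `X`. -/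
def joinSetoid (X Y : Type) [TopologicalSpace X] [TopologicalSpace Y] :
    Setoid (X × Y × unitInterval) where
  r a b := a = b ∨ (a.2.2 = 0 ∧ b.2.2 = 0 ∧ a.1 = b.1) ∨ (a.2.2 = 1 ∧ b.2.2 = 1 ∧ a.2.1 = b.2.1)
  iseqv := by
    constructor
    · exact fun a => Or.inl rfl
    · rintro a b (rfl | ⟨h1, h2, h3⟩ | ⟨h1, h2, h3⟩)
      · exact Or.inl rfl
      · exact Or.inr (Or.inl ⟨h2, h1, h3.symm⟩)
      · exact Or.inr (Or.inr ⟨h2, h1, h3.symm⟩)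
    · rintro a b c (rfl | ⟨h1, h2, h3⟩ | ⟨h1, h2, h3⟩) (rfl | ⟨h4, h5, h6⟩ | ⟨h4, h5, h6⟩)
      · exact Or.inl rfl
      · exact Or.inr (Or.inl ⟨h4, h5, h6⟩)
      · exact Or.inr (Or.inr ⟨h4, h5, h6⟩)
      · exact Or.inr (Or.inl ⟨h1, h2, h3⟩)
      · exact Or.inr (Or.inl ⟨h1, h5, h3.trans h6⟩)
      · exact absurd (congrArg Subtype.val (h4.symm.trans h2))
          (by simp)
      · exact Or.inr (Or.inr ⟨h1, h2, h3⟩)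
      · exact absurd (congrArg Subtype.val (h2.symm.trans h4))
          (by simp)
      · exact Or.inr (Or.inr ⟨h1, h5, h3.trans h6⟩)

/-- The topological join `X * Y`. -/
abbrev TopJoin (X Y : Type) [TopologicalSpace X] [TopologicalSpace Y] : Type :=
  Quotient (joinSetoid X Y)

/-- A continuous map is a homotopy equivalence. -/
def IsHomotopyEquiv {X Y : Type} [TopologicalSpace X] [TopologicalSpace Y] (f : C(X, Y)) : Prop :=
  ∃ g : C(Y, X), (g.comp f).Homotopic (ContinuousMap.id X) ∧
    (f.comp g).Homotopic (ContinuousMap.id Y)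

/-- A `ℤ/2`-equivariant homotopy equivalence between spaces with involutions, where all maps and
homotopies are equivariant. -/
def IsZ2HomotopyEquiv {X Y : Type} [TopologicalSpace X] [TopologicalSpace Y]
    (τ : C(X, X)) (ρ : C(Y, Y)) : Prop :=
  ∃ (f : C(X, Y)) (g : C(Y, X)),
    (∀ x, f (τ x) = ρ (f x)) ∧ (∀ y, g (ρ y) = τ (g y)) ∧
    (∃ H : (g.comp f).Homotopy (ContinuousMap.id X), ∀ x t, H (t, τ x) = τ (H (t, x))) ∧
    (∃ K : (f.comp g).Homotopy (ContinuousMap.id Y), ∀ y t, K (t, ρ y) = ρ (K (t, y)))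

/-- Real projective `m`-space, as the quotient of `S^m` by the antipodal involution. -/
abbrev RPspace (m : ℕ) : Type :=
  Z2Quotient (nSphere m) (nSphereNeg m) (nSphereNeg_invol m)

/-!
`Hom₊(C, K_n)` is the `n`-fold join of the independence complex of `C`, that is, the link of the
`n`-th power of the open cone over that complex. For open cones with involution, joins become
products, and an equivariant homotopy equivalence of cones that stays off the apex yields a
homotopy equivalence of the orbit spaces of the links.

Cutting `C_{2r+1}` at the axis of the reflection turns its cone into pairs of nonnegative weights
with independent support on two paths, exchanged by the involution. In each half, the first four
entries collapse to a single one and one real parameter, so passing from `r + 4` to `r + 1` splits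
off a factor `ℝ × ℝ` with the swap. What remains is a power of `ℝ × ℝ` with the swap, multiplied
by a tripod with two of its legs exchanged if `3 ∣ 2r + 1`.

Without the tripod, the coordinates `p + q` and `p - q` make the involution linear with equal
eigenspaces for `1` and `-1`, and the orbit space of the unit sphere is `S * ℝP`. With the tripod,
the involution exchanges the first two legs in all `n` tripod coordinates, so the orbit space of
the link is covered by `2^{n-1}` spheres, one for each choice of legs with the first leg in the
coordinate `0`. They meet only in points with a nonpositive tripod coordinate, and pushing those
points along the third legs to a base point gives the wedge.
-/

open Topology unitInterval

section Quotients

variable {X Y Z P Q : Type*} [TopologicalSpace X] [TopologicalSpace Y] [TopologicalSpace Z]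
  [TopologicalSpace P] [TopologicalSpace Q]

lemma homotopic_of_comp_isQuotientMap {q : C(Z, Q)} (hq : IsQuotientMap q) {f g : C(Q, Y)}
    (H : (f.comp q).Homotopy (g.comp q))
    (hH : ∀ t x y, q x = q y → H (t, x) = H (t, y)) : f.Homotopic g := by
  have hs := Function.rightInverse_surjInv hq.surjective
  have hcont : Continuous fun a : I × Q => H (a.1, Function.surjInv hq.surjective a.2) := by
    refine hq.continuous_lift_prod_right (H.continuous.congr fun a => ?_)
    exact hH _ _ _ (hs (q a.2)).symm
  refine ⟨⟨⟨_, hcont⟩, fun x => ?_, fun x => ?_⟩⟩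
  · exact (H.apply_zero _).trans (congrArg f (hs x))
  · exact (H.apply_one _).trans (congrArg g (hs x))

variable {p : C(Z, P)} {q : C(Z, Q)} {φ : C(Z, Z)}

lemma comp_lift_homotopic_id (hp : IsQuotientMap p) (hq : IsQuotientMap q)
    (H : (ContinuousMap.id Z).Homotopy φ)
    (hH : ∀ t x y, p x = p y → p (H (t, x)) = p (H (t, y)))
    (hpq : Function.FactorsThrough (q.comp φ) p) (hqp : Function.FactorsThrough (p.comp φ) q) :
    ((hq.lift (p.comp φ) hqp).comp (hp.lift (q.comp φ) hpq)).Homotopic (ContinuousMap.id P) := by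
  have hlift (z : Z) : hq.lift (p.comp φ) hqp (hp.lift (q.comp φ) hpq (p z)) = p (φ (φ z)) :=
    (congrArg _ (DFunLike.congr_fun (hp.lift_comp (q.comp φ) hpq) z)).trans
      (DFunLike.congr_fun (hq.lift_comp (p.comp φ) hqp) (φ z))
  refine ContinuousMap.Homotopic.symm (homotopic_of_comp_isQuotientMap hp
    ⟨⟨fun a => p (H (a.1, H a)), by fun_prop⟩, fun z => ?_, fun z => ?_⟩ fun t x y h => ?_)
  · exact congrArg p ((H.apply_zero _).trans (H.apply_zero z))
  · exact (congrArg p ((H.apply_one _).trans (congrArg φ (H.apply_one z)))).trans (hlift z).symm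
  · exact hH t _ _ (hH t x y h)

/- The two maps are induced by `φ`; running the homotopy twice on `Z` shows that their composites
are homotopic to the identity. -/
lemma nonempty_homotopyEquiv_of_isQuotientMap (hp : IsQuotientMap p) (hq : IsQuotientMap q)
    (H : (ContinuousMap.id Z).Homotopy φ)
    (hHp : ∀ t x y, p x = p y → p (H (t, x)) = p (H (t, y)))
    (hHq : ∀ t x y, q x = q y → q (H (t, x)) = q (H (t, y)))
    (hpq : Function.FactorsThrough (q.comp φ) p) (hqp : Function.FactorsThrough (p.comp φ) q) :
    Nonempty (ContinuousMap.HomotopyEquiv P Q) :=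
  ⟨⟨hp.lift _ hpq, hq.lift _ hqp, comp_lift_homotopic_id hp hq H hHp hpq hqp,
    comp_lift_homotopic_id hq hp H hHq hqp hpq⟩⟩

end Quotients

section Z2Quotient

variable {X Y : Type} [TopologicalSpace X] [TopologicalSpace Y] {τ : C(X, X)} {ρ : C(Y, Y)}
  {hτ : ∀ x, τ (τ x) = x} {hρ : ∀ y, ρ (ρ y) = y}

/-- The projection from a space with involution to its orbit space. -/
def Z2Quotient.mk (hτ : ∀ x, τ (τ x) = x) : C(X, Z2Quotient X τ hτ) :=
  ⟨Quotient.mk _, continuous_quotient_mk'⟩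

lemma Z2Quotient.mk_eq_mk {x y : X} : mk hτ x = mk hτ y ↔ y = x ∨ y = τ x :=
  Quotient.eq

lemma Z2Quotient.isOpenQuotientMap_mk : IsOpenQuotientMap (mk hτ) := by
  refine ⟨Quotient.mk_surjective, (mk hτ).continuous, fun U hU => ?_⟩
  have hpre : mk hτ ⁻¹' (mk hτ '' U) = U ∪ τ ⁻¹' U := by
    ext x
    simp only [Set.mem_preimage, Set.mem_image, mk_eq_mk, Set.mem_union]
    constructor
    · rintro ⟨y, hy, rfl | rfl⟩
      exacts [.inl hy, .inr ((hτ y).symm ▸ hy)]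
    · rintro (hx | hx)
      exacts [⟨x, hx, .inl rfl⟩, ⟨τ x, hx, .inr (hτ x).symm⟩]
  have hopen : IsOpen (mk hτ ⁻¹' (mk hτ '' U)) := hpre ▸ hU.union (hU.preimage τ.continuous)
  exact hopen

instance Z2Quotient.instT2Space [T2Space X] : T2Space (Z2Quotient X τ hτ) := by
  refine (t2Space_iff_of_isOpenQuotientMap (isOpenQuotientMap_mk (hτ := hτ))).2 ?_
  simp only [mk_eq_mk, Set.ofPred_or]
  exact (isClosed_eq continuous_snd continuous_fst).union
    (isClosed_eq continuous_snd (τ.continuous.comp continuous_fst))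

/-- The map of orbit spaces induced by an equivariant map. -/
def Z2Quotient.map (hτ : ∀ x, τ (τ x) = x) (hρ : ∀ y, ρ (ρ y) = y) (f : C(X, Y))
    (hf : ∀ x, f (τ x) = ρ (f x)) : C(Z2Quotient X τ hτ, Z2Quotient Y ρ hρ) where
  toFun := Quotient.lift (fun x => mk hρ (f x)) fun _ _ h =>
    mk_eq_mk.2 (h.imp (congrArg f) fun e => (congrArg f e).trans (hf _))
  continuous_toFun := Continuous.quotient_lift (by fun_prop) _

@[simp]
lemma Z2Quotient.map_mk (f : C(X, Y)) (hf : ∀ x, f (τ x) = ρ (f x)) (x : X) :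
    map hτ hρ f hf (mk hτ x) = mk hρ (f x) :=
  rfl

lemma Z2Quotient.map_comp_map_homotopic_id {f : C(X, Y)} {g : C(Y, X)}
    (hf : ∀ x, f (τ x) = ρ (f x)) (hg : ∀ y, g (ρ y) = τ (g y))
    (H : (g.comp f).Homotopy (ContinuousMap.id X)) (hH : ∀ x t, H (t, τ x) = τ (H (t, x))) :
    ((map hρ hτ g hg).comp (map hτ hρ f hf)).Homotopic (ContinuousMap.id _) := by
  refine homotopic_of_comp_isQuotientMap (q := mk hτ) isOpenQuotientMap_mk.isQuotientMap
    ⟨(mk hτ).comp H.toContinuousMap, fun x => ?_, fun x => ?_⟩ fun t x y h => ?_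
  · simp
  · simp
  · exact mk_eq_mk.2 ((mk_eq_mk.1 h).imp (fun e => by rw [e]) fun e => by rw [e]; exact hH x t)

lemma Z2Quotient.nonempty_homotopyEquiv (h : IsZ2HomotopyEquiv τ ρ) :
    Nonempty (ContinuousMap.HomotopyEquiv (Z2Quotient X τ hτ) (Z2Quotient Y ρ hρ)) := by
  obtain ⟨f, g, hf, hg, ⟨H, hH⟩, K, hK⟩ := h
  exact ⟨⟨map hτ hρ f hf, map hρ hτ g hg, map_comp_map_homotopic_id hf hg H hH,
    map_comp_map_homotopic_id hg hf K hK⟩⟩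

end Z2Quotient

section Z2Homotopy

variable {X Y : Type} [TopologicalSpace X] [TopologicalSpace Y] {τ : C(X, X)} {ρ : C(Y, Y)}

lemma isZ2HomotopyEquiv_of_homeomorph (e : X ≃ₜ Y) (he : ∀ x, e (τ x) = ρ (e x)) :
    IsZ2HomotopyEquiv τ ρ := by
  have hsymm (y : Y) : e.symm (ρ y) = τ (e.symm y) := by
    rw [e.symm_apply_eq, he, e.apply_symm_apply]
  refine ⟨⟨e, e.continuous⟩, ⟨e.symm, e.symm.continuous⟩, he, hsymm, ?_, ?_⟩
  · exact ⟨⟨.snd, fun x => (e.symm_apply_apply x).symm, fun _ => rfl⟩, fun _ _ => rfl⟩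
  · exact ⟨⟨.snd, fun y => (e.apply_symm_apply y).symm, fun _ => rfl⟩, fun _ _ => rfl⟩

end Z2Homotopy

section Z2Cone

/-- A pointed space with an involution fixing the base point. We think of it as the open cone,
with apex `pt`, over a space with involution. -/
structure Z2Cone where
  carrier : Type
  [top : TopologicalSpace carrier]
  pt : carrier
  inv : C(carrier, carrier)
  inv_inv : ∀ x, inv (inv x) = x
  inv_pt : inv pt = pt

namespace Z2Cone

instance : CoeSort Z2Cone Type := ⟨carrier⟩

attribute [instance] top
attribute [simp] inv_inv inv_pt

variable {A B C D : Z2Cone}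

lemma inv_eq_pt {x : A} : A.inv x = A.pt ↔ x = A.pt :=
  ⟨fun h => by rw [← A.inv_inv x, h, A.inv_pt], fun h => by rw [h, A.inv_pt]⟩

/-- A cone without its apex. -/
abbrev Punctured (A : Z2Cone) : Type := {x : A // x ≠ A.pt}

/-- The involution of the complement of the apex. -/
def puncturedInv (A : Z2Cone) : C(A.Punctured, A.Punctured) where
  toFun x := ⟨A.inv x.1, fun h => x.2 (inv_eq_pt.1 h)⟩

lemma puncturedInv_puncturedInv (x : A.Punctured) : A.puncturedInv (A.puncturedInv x) = x :=
  Subtype.ext (A.inv_inv x.1)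

/-- The orbit space of the complement of the apex. -/
abbrev PuncturedQuotient (A : Z2Cone) : Type :=
  Z2Quotient A.Punctured A.puncturedInv puncturedInv_puncturedInv

/-- The product of two cones, with the diagonal involution. -/
def prod (A B : Z2Cone) : Z2Cone where
  carrier := A × B
  pt := (A.pt, B.pt)
  inv := A.inv.prodMap B.inv
  inv_inv x := Prod.ext (A.inv_inv x.1) (B.inv_inv x.2)
  inv_pt := Prod.ext A.inv_pt B.inv_pt

/-- The power of a cone, with the diagonal involution. -/
def pow (A : Z2Cone) (ι : Type) : Z2Cone where
  carrier := ι → A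
  pt _ := A.pt
  inv := ContinuousMap.piMap fun _ => A.inv
  inv_inv x := funext fun i => A.inv_inv (x i)
  inv_pt := funext fun _ => A.inv_pt

/-- Equivariant maps sending only the apex to the apex, hence restricting to the punctured
cones. -/
structure IsConeMap (f : C(A, B)) : Prop where
  map_inv : ∀ x, f (A.inv x) = B.inv (f x)
  eq_pt : ∀ x, f x = B.pt → x = A.pt

lemma isConeMap_id : IsConeMap (ContinuousMap.id A) :=
  ⟨fun _ => rfl, fun _ => id⟩

lemma IsConeMap.comp {g : C(B, C)} {f : C(A, B)} (hg : IsConeMap g) (hf : IsConeMap f) :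
    IsConeMap (g.comp f) :=
  ⟨fun x => (congrArg g (hf.map_inv x)).trans (hg.map_inv _), fun x h => hf.eq_pt x (hg.eq_pt _ h)⟩

lemma IsConeMap.homotopicWith_comp {k : C(B, D)} {h : C(C, A)} (hk : IsConeMap k)
    (hh : IsConeMap h) {f g : C(A, B)} (H : ContinuousMap.HomotopicWith f g IsConeMap) :
    ContinuousMap.HomotopicWith ((k.comp f).comp h) ((k.comp g).comp h) IsConeMap := by
  obtain ⟨H⟩ := H
  exact ⟨⟨⟨⟨fun a => k (H (a.1, h a.2)), by fun_prop⟩, fun x => congrArg k (H.apply_zero _),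
    fun x => congrArg k (H.apply_one _)⟩, fun t => (hk.comp (H.prop t)).comp hh⟩⟩

lemma homotopicWith_isConeMap {f g : C(A, B)} (H : C(I × A, B)) (h₀ : ∀ x, H (0, x) = f x)
    (h₁ : ∀ x, H (1, x) = g x) (hinv : ∀ t x, H (t, A.inv x) = B.inv (H (t, x)))
    (hpt : ∀ t x, H (t, x) = B.pt → x = A.pt) : ContinuousMap.HomotopicWith f g IsConeMap :=
  ⟨⟨⟨H, h₀, h₁⟩, fun t => ⟨hinv t, hpt t⟩⟩⟩

lemma IsConeMap.prodMap {f : C(A, B)} {g : C(C, D)} (hf : IsConeMap f) (hg : IsConeMap g) :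
    IsConeMap (A := A.prod C) (B := B.prod D) (f.prodMap g) :=
  ⟨fun x => Prod.ext (hf.map_inv x.1) (hg.map_inv x.2), fun x h =>
    Prod.ext (hf.eq_pt x.1 (congrArg Prod.fst h)) (hg.eq_pt x.2 (congrArg Prod.snd h))⟩

lemma IsConeMap.piMap {ι : Type} {f : C(A, B)} (hf : IsConeMap f) :
    IsConeMap (A := A.pow ι) (B := B.pow ι) (ContinuousMap.piMap fun _ => f) :=
  ⟨fun x => funext fun i => hf.map_inv (x i), fun x h =>
    funext fun i => hf.eq_pt (x i) (congrFun h i)⟩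

/-- The restriction of a cone map to the punctured cones. -/
def IsConeMap.punctured {f : C(A, B)} (hf : IsConeMap f) : C(A.Punctured, B.Punctured) where
  toFun x := ⟨f x.1, fun h => x.2 (hf.eq_pt _ h)⟩

lemma exists_homotopy_punctured {f : C(A, B)} {g : C(B, A)}
    (hf : IsConeMap f) (hg : IsConeMap g)
    (H : (g.comp f).HomotopicWith (ContinuousMap.id A) IsConeMap) :
    ∃ H : (hg.punctured.comp hf.punctured).Homotopy (ContinuousMap.id A.Punctured),
      ∀ x t, H (t, A.puncturedInv x) = A.puncturedInv (H (t, x)) := by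
  obtain ⟨H⟩ := H
  refine ⟨⟨⟨fun a => ⟨H (a.1, a.2.1), fun h => a.2.2 ((H.prop a.1).eq_pt _ h)⟩, by fun_prop⟩,
    fun x => Subtype.ext (H.apply_zero _), fun x => Subtype.ext (H.apply_one _)⟩, fun x t => ?_⟩
  exact Subtype.ext ((H.prop t).map_inv x.1)

/-- Homotopy equivalence of cones, through cone maps. -/
def ConeEquiv (A B : Z2Cone) : Prop :=
  ∃ (f : C(A, B)) (g : C(B, A)), IsConeMap f ∧ IsConeMap g ∧
    (g.comp f).HomotopicWith (ContinuousMap.id A) IsConeMap ∧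
    (f.comp g).HomotopicWith (ContinuousMap.id B) IsConeMap

namespace ConeEquiv

lemma of_homeomorph (e : A ≃ₜ B) (he : ∀ x, e (A.inv x) = B.inv (e x)) (hpt : e A.pt = B.pt) :
    ConeEquiv A B := by
  have hef : IsConeMap (e : C(A, B)) := ⟨he, fun x h => e.injective (h.trans hpt.symm)⟩
  have hes : IsConeMap (e.symm : C(B, A)) := by
    refine ⟨fun y => ?_, fun y h => ?_⟩
    · exact e.injective (by simp [he])
    · exact e.symm.injective (h.trans (e.symm_apply_eq.2 hpt.symm).symm)
  exact ⟨e, e.symm, hef, hes, by simpa using .refl _ isConeMap_id,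
    by simpa using .refl _ isConeMap_id⟩

lemma refl (A : Z2Cone) : ConeEquiv A A :=
  of_homeomorph (Homeomorph.refl A) (fun _ => rfl) rfl

lemma trans (hAB : ConeEquiv A B) (hBC : ConeEquiv B C) : ConeEquiv A C := by
  obtain ⟨f, f', hf, hf', H, H'⟩ := hAB
  obtain ⟨g, g', hg, hg', K, K'⟩ := hBC
  exact ⟨g.comp f, f'.comp g', hg.comp hf, hf'.comp hg', (hf'.homotopicWith_comp hf K).trans H,
    (hg.homotopicWith_comp hg' H').trans K'⟩

lemma prod (hAB : ConeEquiv A B) (hCD : ConeEquiv C D) : ConeEquiv (A.prod C) (B.prod D) := by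
  obtain ⟨f, f', hf, hf', ⟨H⟩, ⟨H'⟩⟩ := hAB
  obtain ⟨g, g', hg, hg', ⟨K⟩, ⟨K'⟩⟩ := hCD
  exact ⟨f.prodMap g, f'.prodMap g', hf.prodMap hg, hf'.prodMap hg',
    ⟨H.toHomotopy.prodMap K.toHomotopy, fun t => (H.prop t).prodMap (K.prop t)⟩,
    ⟨H'.toHomotopy.prodMap K'.toHomotopy, fun t => (H'.prop t).prodMap (K'.prop t)⟩⟩

lemma pow (ι : Type) (hAB : ConeEquiv A B) : ConeEquiv (A.pow ι) (B.pow ι) := by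
  obtain ⟨f, f', hf, hf', ⟨H⟩, ⟨H'⟩⟩ := hAB
  exact ⟨.piMap fun _ => f, .piMap fun _ => f', hf.piMap, hf'.piMap,
    ⟨ContinuousMap.Homotopy.piMap fun _ => H.toHomotopy, fun t => (H.prop t).piMap⟩,
    ⟨ContinuousMap.Homotopy.piMap fun _ => H'.toHomotopy, fun t => (H'.prop t).piMap⟩⟩

lemma nonempty_homotopyEquiv_puncturedQuotient (h : ConeEquiv A B) :
    Nonempty (ContinuousMap.HomotopyEquiv A.PuncturedQuotient B.PuncturedQuotient) := by
  obtain ⟨f, g, hf, hg, H, K⟩ := h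
  exact Z2Quotient.nonempty_homotopyEquiv ⟨hf.punctured, hg.punctured,
    fun x => Subtype.ext (hf.map_inv x.1), fun y => Subtype.ext (hg.map_inv y.1),
    exists_homotopy_punctured hf hg H, exists_homotopy_punctured hg hf K⟩

end ConeEquiv

/-- A scaling action of the nonnegative reals on a cone, together with a gauge: a continuous
invariant homogeneous function vanishing only at the apex. -/
structure Gauge (A : Z2Cone) where
  scale : C(NNReal × A, A)
  norm : C(A, NNReal)
  scale_one : ∀ x, scale (1, x) = x
  scale_inv : ∀ c x, scale (c, A.inv x) = A.inv (scale (c, x))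
  norm_scale : ∀ c x, norm (scale (c, x)) = c * norm x
  norm_inv : ∀ x, norm (A.inv x) = norm x
  norm_eq_zero : ∀ x, norm x = 0 ↔ x = A.pt

namespace Gauge

/-- The base of the cone: the points of norm one. -/
abbrev Link (N : Gauge A) : Type := {x : A // N.norm x = 1}

/-- The involution of the link. -/
def linkInv (N : Gauge A) : C(N.Link, N.Link) where
  toFun x := ⟨A.inv x.1, (N.norm_inv _).trans x.2⟩

lemma linkInv_linkInv {N : Gauge A} (x : N.Link) : N.linkInv (N.linkInv x) = x :=
  Subtype.ext (A.inv_inv x.1)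

variable (N : Gauge A)

lemma norm_ne_zero {x : A} (hx : x ≠ A.pt) : N.norm x ≠ 0 :=
  mt (N.norm_eq_zero x).1 hx

lemma scale_ne_pt {c : NNReal} {x : A} (hc : c ≠ 0) (hx : x ≠ A.pt) : N.scale (c, x) ≠ A.pt := by
  rw [Ne, ← N.norm_eq_zero, N.norm_scale]
  exact mul_ne_zero hc (N.norm_ne_zero hx)

lemma continuous_inv_norm : Continuous fun x : A.Punctured => (N.norm x.1)⁻¹ :=
  (N.norm.continuous.comp continuous_subtype_val).inv₀ fun x => N.norm_ne_zero x.2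

/-- The radial projection of the punctured cone to its link. -/
def proj : C(A.Punctured, N.Link) where
  toFun x := ⟨N.scale ((N.norm x.1)⁻¹, x.1), by
    rw [N.norm_scale, inv_mul_cancel₀ (N.norm_ne_zero x.2)]⟩
  continuous_toFun := by
    have := N.continuous_inv_norm
    exact (N.scale.continuous.comp (this.prodMk continuous_subtype_val)).subtype_mk _

/-- The inclusion of the link. -/
def incl : C(N.Link, A.Punctured) where
  toFun x := ⟨x.1, fun h => by simpa [(N.norm_eq_zero _).2 h] using x.2⟩

/-- The straight-line deformation of the punctured cone to its link, along the rays. -/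
def radialHomotopy : (N.incl.comp N.proj).Homotopy (ContinuousMap.id A.Punctured) where
  toFun a := ⟨N.scale (unitInterval.toNNReal (unitInterval.symm a.1) * (N.norm a.2.1)⁻¹ +
    unitInterval.toNNReal a.1, a.2.1), N.scale_ne_pt (fun h => by
      have hne := inv_ne_zero (N.norm_ne_zero a.2.2)
      have hadd := unitInterval.toNNReal_add_toNNReal_symm a.1
      simp_all) a.2.2⟩
  continuous_toFun := by
    have := N.continuous_inv_norm.comp (continuous_snd (X := I))
    refine (N.scale.continuous.comp (Continuous.prodMk ?_ (by fun_prop))).subtype_mk _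
    exact ((by fun_prop : Continuous _).mul this).add (by fun_prop)
  map_zero_left x := Subtype.ext (by simp [incl, proj])
  map_one_left x := Subtype.ext (by simp [N.scale_one])

lemma coe_radialHomotopy_apply (t : I) (x : A.Punctured) :
    (N.radialHomotopy (t, x)).1 = N.scale (unitInterval.toNNReal (unitInterval.symm t) *
      (N.norm x.1)⁻¹ + unitInterval.toNNReal t, x.1) :=
  rfl

lemma nonempty_homotopyEquiv_puncturedQuotient_link :
    Nonempty (ContinuousMap.HomotopyEquiv A.PuncturedQuotient
      (Z2Quotient N.Link N.linkInv linkInv_linkInv)) := by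
  refine Z2Quotient.nonempty_homotopyEquiv ⟨N.proj, N.incl, fun x => ?_, fun _ => rfl,
    ⟨N.radialHomotopy, fun x t => ?_⟩, ⟨.snd, fun x => ?_, fun _ => rfl⟩, fun _ _ => rfl⟩
  · exact Subtype.ext (by simp [proj, puncturedInv, linkInv, N.norm_inv, N.scale_inv])
  · exact Subtype.ext (by simp [coe_radialHomotopy_apply, puncturedInv, N.norm_inv, N.scale_inv])
  · exact Subtype.ext (by simp [incl, proj, x.2, N.scale_one])

end Gauge

end Z2Cone

end Z2Cone

section SwapSquare

open Z2Cone

/-- The square `E × E` with the swap of the two factors, as a cone with apex the origin. -/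
def swapSquare (E : Type) [TopologicalSpace E] [Zero E] : Z2Cone where
  carrier := E × E
  pt := 0
  inv := ContinuousMap.prodSwap
  inv_inv := Prod.swap_swap
  inv_pt := rfl

variable (E F : Type) [TopologicalSpace E] [TopologicalSpace F] [Zero E] [Zero F]

lemma coneEquiv_swapSquare_prod :
    ConeEquiv ((swapSquare E).prod (swapSquare F)) (swapSquare (E × F)) :=
  .of_homeomorph (Homeomorph.prodProdProdComm E E F F) (fun _ => rfl) rfl

lemma coneEquiv_prod_swapSquare [Subsingleton E] (A : Z2Cone) :
    ConeEquiv A (A.prod (swapSquare E)) :=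
  letI : Unique (E × E) := ⟨⟨0⟩, fun _ => Subsingleton.elim _ _⟩
  .of_homeomorph (Homeomorph.prodUnique A (E × E)).symm
    (fun _ => Prod.ext rfl (Subsingleton.elim (α := E × E) _ _))
    (Prod.ext rfl (Subsingleton.elim (α := E × E) _ _))

lemma coneEquiv_prod_assoc (A B C : Z2Cone) :
    ConeEquiv ((A.prod B).prod C) (A.prod (B.prod C)) :=
  .of_homeomorph (Homeomorph.prodAssoc A B C) (fun _ => rfl) rfl

/-- Families of pairs as pairs of families. -/
def arrowProdHomeomorph (ι X Y : Type*) [TopologicalSpace X] [TopologicalSpace Y] :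
    (ι → X × Y) ≃ₜ (ι → X) × (ι → Y) where
  toEquiv := Equiv.arrowProdEquivProdArrow ι (fun _ => X) fun _ => Y
  continuous_toFun := (continuous_pi fun i => (continuous_apply i).fst).prodMk
    (continuous_pi fun i => (continuous_apply i).snd)
  continuous_invFun := continuous_pi fun i => (continuous_apply i).prodMap (continuous_apply i)

lemma coneEquiv_pow_prod (A B : Z2Cone) (ι : Type) :
    ConeEquiv ((A.prod B).pow ι) ((A.pow ι).prod (B.pow ι)) :=
  .of_homeomorph (arrowProdHomeomorph ι A B) (fun _ => rfl) rfl

lemma coneEquiv_swapSquare_pow (ι : Type) :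
    ConeEquiv ((swapSquare E).pow ι) (swapSquare (ι → E)) :=
  .of_homeomorph (arrowProdHomeomorph ι E E) (fun _ => rfl) rfl

variable {E F : Type} [NormedAddCommGroup E] [NormedSpace ℝ E] [NormedAddCommGroup F]
  [NormedSpace ℝ F] [FiniteDimensional ℝ E] [FiniteDimensional ℝ F]

lemma coneEquiv_swapSquare_of_finrank_eq (h : Module.finrank ℝ E = Module.finrank ℝ F) :
    ConeEquiv (swapSquare E) (swapSquare F) :=
  let L := ContinuousLinearEquiv.ofFinrankEq h
  .of_homeomorph (L.toHomeomorph.prodCongr L.toHomeomorph) (fun _ => rfl)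
    (Prod.ext L.map_zero L.map_zero)

end SwapSquare

section IndependenceCone

open Z2Cone

/-- The cone over the independence complex of `G`: nonnegative weights on the vertices whose
support is an independent set. -/
abbrev IndWeights (G : Graph) : Type :=
  {f : G.V → ℝ // (∀ v, 0 ≤ f v) ∧ ∀ x y, G.adj x y → f x = 0 ∨ f y = 0}

variable {G : Graph} {n : ℕ}

lemma continuous_indWeights_apply (c : Fin n) (v : G.V) :
    Continuous fun F : Fin n → IndWeights G => (F c).1 v :=
  (continuous_apply v).comp (continuous_subtype_val.comp (continuous_apply c))

variable (G n) in
/-- Scaling of an `n`-tuple of weights. -/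
def indScale : C(NNReal × (Fin n → IndWeights G), Fin n → IndWeights G) where
  toFun a c := ⟨fun v => a.1 * (a.2 c).1 v, fun v => mul_nonneg a.1.2 ((a.2 c).2.1 v),
    fun x y h => ((a.2 c).2.2 x y h).imp (mul_eq_zero_of_right _)
      (mul_eq_zero_of_right _)⟩
  continuous_toFun := by
    refine continuous_pi fun c => Continuous.subtype_mk (continuous_pi fun v => ?_) _
    exact (NNReal.continuous_coe.comp continuous_fst).mul
      ((continuous_indWeights_apply c v).comp continuous_snd)

variable (G n) in
/-- The sum of all entries of an `n`-tuple of weights. -/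
def totalWeight : C(Fin n → IndWeights G, NNReal) where
  toFun F := ⟨∑ v, ∑ c, (F c).1 v, sum_nonneg fun v _ => sum_nonneg fun c _ => (F c).2.1 v⟩
  continuous_toFun := (continuous_finsetSum _ fun v _ => continuous_finsetSum _ fun c _ =>
    continuous_indWeights_apply c v).subtype_mk _

lemma totalWeight_indScale (a : NNReal) (F : Fin n → IndWeights G) :
    totalWeight G n (indScale G n (a, F)) = a * totalWeight G n F :=
  NNReal.eq <| show ∑ v, ∑ c, a * (F c).1 v = a * ∑ v, ∑ c, (F c).1 v by simp only [mul_sum]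

lemma totalWeight_eq_zero {F : Fin n → IndWeights G} :
    totalWeight G n F = 0 ↔ ∀ c v, (F c).1 v = 0 := by
  have hnonneg (v : G.V) : 0 ≤ ∑ c, (F c).1 v := sum_nonneg fun c _ => (F c).2.1 v
  rw [← NNReal.coe_eq_zero]
  change ∑ v, ∑ c, (F c).1 v = 0 ↔ _
  rw [sum_eq_zero_iff_of_nonneg fun v _ => hnonneg v, forall_comm]
  simp only [mem_univ, true_imp_iff, sum_eq_zero_iff_of_nonneg fun c _ => (F c).2.1 _]

variable (γ : GraphHom G G) (hγ : ∀ v, γ.1 (γ.1 v) = v)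

/-- The cone over the independence complex, with the involution induced by one of the graph. -/
def indCone : Z2Cone where
  carrier := IndWeights G
  pt := ⟨fun _ => 0, fun _ => le_rfl, fun _ _ _ => .inl rfl⟩
  inv := {
    toFun := fun f => ⟨fun v => f.1 (γ.1 v), fun _ => f.2.1 _, fun x y h => f.2.2 _ _ (γ.2 x y h)⟩
    continuous_toFun := (continuous_pi fun v => (continuous_apply (γ.1 v)).comp
      continuous_subtype_val : Continuous fun (f : IndWeights G) v => f.1 (γ.1 v)).subtype_mk _ }
  inv_inv f := Subtype.ext (funext fun v => congrArg f.1 (hγ v))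
  inv_pt := rfl

variable {γ}

variable {hγ} in
lemma indCone_ext {f g : indCone γ hγ} (h : ∀ v, f.1 v = g.1 v) : f = g :=
  Subtype.ext (funext h)

variable (n)

/-- The total weight, as a gauge on the `n`-th power of the cone over the independence complex. -/
def indGauge : Gauge ((indCone γ hγ).pow (Fin n)) where
  scale := indScale G n
  norm := totalWeight G n
  scale_one _ := funext fun _ => indCone_ext fun _ => one_mul _
  scale_inv _ _ := rfl
  norm_scale := totalWeight_indScale
  norm_inv F := NNReal.eq <|
    (Function.Involutive.bijective hγ).sum_comp fun v => ∑ c, (F c).1 v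
  norm_eq_zero _ := totalWeight_eq_zero.trans
    ⟨fun h => funext fun c => indCone_ext (h c), fun h c v => congrArg (fun F => (F c).1 v) h⟩

/-- A weight on `G × Kₙ` supported on partial homomorphisms is an `n`-tuple of weights supported on
independent sets, one for each colour. -/
def homPlusHomeomorphLink : HomPlus G (completeGraph n) ≃ₜ (indGauge n hγ).Link where
  toFun f := ⟨fun c => ⟨fun v => f.1 v c, fun v => f.2.1 v c, fun x y h =>
    or_iff_not_imp_left.2 fun hx => by_contra fun hy => f.2.2.2 x y h c c hx hy rfl⟩,
    NNReal.eq f.2.2.1⟩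
  invFun F := ⟨fun v c => (F.1 c).1 v, fun v c => (F.1 c).2.1 v, congrArg NNReal.toReal F.2,
    fun x y h a b ha hb hab => ((F.1 a).2.2 x y h).elim ha fun h0 => hb (hab ▸ h0)⟩
  left_inv _ := rfl
  right_inv _ := rfl
  continuous_toFun := by
    refine Continuous.subtype_mk (continuous_pi fun c => Continuous.subtype_mk
      (continuous_pi fun v => ?_) _) _
    exact (continuous_apply c).comp ((continuous_apply v).comp continuous_subtype_val)
  continuous_invFun := by
    refine Continuous.subtype_mk (continuous_pi fun v => continuous_pi fun c => ?_) _
    exact (continuous_indWeights_apply c v).comp continuous_subtype_val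

lemma nonempty_homotopyEquiv_homPlus (hbij : Function.Bijective γ.1) :
    Nonempty (ContinuousMap.HomotopyEquiv
      (Z2Quotient (HomPlus G (completeGraph n)) (precompHomPlus γ hbij (completeGraph n))
        (precompHomPlus_invol γ hbij hγ (completeGraph n)))
      ((indCone γ hγ).pow (Fin n)).PuncturedQuotient) := by
  obtain ⟨e⟩ := Z2Quotient.nonempty_homotopyEquiv
    (hτ := precompHomPlus_invol γ hbij hγ (completeGraph n)) (hρ := Gauge.linkInv_linkInv)
    (isZ2HomotopyEquiv_of_homeomorph (homPlusHomeomorphLink n hγ) fun _ => rfl)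
  obtain ⟨e'⟩ := (indGauge n hγ).nonempty_homotopyEquiv_puncturedQuotient_link
  exact ⟨e.trans e'.symm⟩

end IndependenceCone

section OddCycle

open Z2Cone

/-- Weights on the path `0, 1, …, r` with independent support, extended by zero to `ℕ`. -/
structure IsPathWeight (r : ℕ) (z : ℕ → ℝ) : Prop where
  nonneg : ∀ n, 0 ≤ z n
  eq_zero_or : ∀ n, z n = 0 ∨ z (n + 1) = 0
  eq_zero : ∀ n, r < n → z n = 0

/-- Weights on `C_{2r+1}` with independent support, as the pairs of their restrictions to the two
halves of the cycle. In both halves `r` is the fixed vertex of the reflection and `0` is an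
end point of the opposite edge. -/
abbrev PathPair (r : ℕ) : Type :=
  {p : (ℕ → ℝ) × (ℕ → ℝ) //
    (IsPathWeight r p.1 ∧ IsPathWeight r p.2) ∧ p.1 r = p.2 r ∧ (p.1 0 = 0 ∨ p.2 0 = 0)}

lemma isPathWeight_zero (r : ℕ) : IsPathWeight r 0 :=
  ⟨fun _ => le_rfl, fun _ => .inl rfl, fun _ _ => rfl⟩

/-- The cone of path pairs, with the exchange of the two halves. -/
def pathCone (r : ℕ) : Z2Cone where
  carrier := PathPair r
  pt := ⟨0, ⟨isPathWeight_zero r, isPathWeight_zero r⟩, rfl, .inl rfl⟩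
  inv := {
    toFun := fun p => ⟨p.1.swap, p.2.1.symm, p.2.2.1.symm, p.2.2.2.symm⟩
    continuous_toFun := by fun_prop }
  inv_inv _ := rfl
  inv_pt := rfl

variable {r : ℕ}

/-- The restriction of a weight on the odd cycle to a half. -/
def unroll (f : ZMod (2 * r + 1) → ℝ) (n : ℕ) : ℝ :=
  if n ≤ r then f (r - n) else 0

lemma isPathWeight_unroll {f : ZMod (2 * r + 1) → ℝ} (hf : ∀ v, 0 ≤ f v)
    (hadj : ∀ v, f v = 0 ∨ f (v + 1) = 0) : IsPathWeight r (unroll f) where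
  nonneg n := by unfold unroll; split_ifs <;> simp [hf]
  eq_zero_or n := by
    unfold unroll
    split_ifs with _ h
    · have := (hadj (r - (n + 1 : ℕ))).symm
      rwa [show (r - (n + 1 : ℕ) + 1 : ZMod (2 * r + 1)) = r - n by push_cast; ring] at this
    all_goals simp
  eq_zero n hn := if_neg hn.not_ge

lemma continuous_unroll : Continuous (unroll (r := r)) := by
  refine continuous_pi fun n => ?_
  unfold unroll
  split_ifs <;> fun_prop

lemma cast_self_add_one : (r : ZMod (2 * r + 1)) + 1 = -r := by
  have h := ZMod.natCast_self (2 * r + 1)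
  push_cast at h
  linear_combination h

/-- The two halves of a weight on the odd cycle, listed along the cycle: the entry `k ≤ 2r + 1` is
the weight of the vertex `k`. -/
def glueSeq (r : ℕ) (z z' : ℕ → ℝ) (k : ℕ) : ℝ :=
  if k ≤ r then z (r - k) else z' (k - r - 1)

lemma continuous_glueSeq (k : ℕ) :
    Continuous fun p : (ℕ → ℝ) × (ℕ → ℝ) => glueSeq r p.1 p.2 k := by
  unfold glueSeq
  split_ifs <;> fun_prop

lemma glueSeq_nonneg {z z' : ℕ → ℝ} (hz : IsPathWeight r z) (hz' : IsPathWeight r z') (k : ℕ) :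
    0 ≤ glueSeq r z z' k := by
  unfold glueSeq
  split_ifs
  exacts [hz.nonneg _, hz'.nonneg _]

lemma glueSeq_eq_zero_or {z z' : ℕ → ℝ} (hz : IsPathWeight r z) (hz' : IsPathWeight r z')
    (h0 : z 0 = 0 ∨ z' 0 = 0) (k : ℕ) :
    glueSeq r z z' k = 0 ∨ glueSeq r z z' (k + 1) = 0 := by
  unfold glueSeq
  rcases lt_trichotomy k r with h | rfl | h
  · have := (hz.eq_zero_or (r - (k + 1))).symm
    rw [if_pos h.le, if_pos (by lia)]
    rwa [show r - (k + 1) + 1 = r - k by lia] at this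
  · simpa using h0
  · have := hz'.eq_zero_or (k - r - 1)
    rw [if_neg h.not_ge, if_neg (by lia)]
    rwa [show k - r - 1 + 1 = k + 1 - r - 1 by lia] at this

lemma glueSeq_val_natCast {z z' : ℕ → ℝ} (hr : z r = z' r) {k : ℕ} (hk : k ≤ 2 * r + 1) :
    glueSeq r z z' (k : ZMod (2 * r + 1)).val = glueSeq r z z' k := by
  rcases hk.lt_or_eq with h | rfl
  · rw [ZMod.val_cast_of_lt h]
  · rw [ZMod.natCast_self, ZMod.val_zero]
    simp [glueSeq, hr, show ¬ 2 * r + 1 ≤ r by lia, show 2 * r + 1 - r - 1 = r by lia]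

/-- Weights on the odd cycle with independent support, as path pairs. -/
def unrollPair (f : IndWeights (oddCycle r)) : PathPair r := by
  have h0 (v : ZMod (2 * r + 1)) : f.1 v = 0 ∨ f.1 (v + 1) = 0 := f.2.2 v (v + 1) (.inr rfl)
  refine ⟨(unroll f.1, unroll fun v => f.1 (-v : ZMod (2 * r + 1))),
    ⟨isPathWeight_unroll f.2.1 h0,
      isPathWeight_unroll (fun v => f.2.1 _) fun v => ?_⟩, ?_, ?_⟩
  · simpa [neg_add_rev] using (h0 (-(v + 1))).symm
  · simp [unroll]
  · simpa [unroll, cast_self_add_one] using h0 r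

/-- The weight on the odd cycle with the given halves. -/
def gluePair (p : PathPair r) : IndWeights (oddCycle r) := by
  have h0 (v : ZMod (2 * r + 1)) :
      glueSeq r p.1.1 p.1.2 v.val = 0 ∨ glueSeq r p.1.1 p.1.2 (v + 1).val = 0 := by
    have := glueSeq_eq_zero_or p.2.1.1 p.2.1.2 p.2.2.2 v.val
    rwa [← glueSeq_val_natCast p.2.2.1 (k := v.val + 1) v.val_lt, Nat.cast_add, Nat.cast_one,
      ZMod.natCast_zmod_val] at this
  refine ⟨fun v : ZMod (2 * r + 1) => glueSeq r p.1.1 p.1.2 v.val,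
    fun v => glueSeq_nonneg p.2.1.1 p.2.1.2 _, ?_⟩
  rintro x y (rfl | rfl)
  exacts [(h0 y).symm, h0 x]

lemma gluePair_unrollPair (f : IndWeights (oddCycle r)) : gluePair (unrollPair f) = f := by
  refine Subtype.ext (funext fun v : ZMod (2 * r + 1) => ?_)
  change glueSeq r (unroll f.1) (unroll fun v => f.1 (-v : ZMod (2 * r + 1))) v.val = f.1 v
  unfold glueSeq unroll
  split_ifs with h
  · simp [Nat.cast_sub h]
  · lia
  · have hcast : ((v.val - r - 1 : ℕ) : ZMod (2 * r + 1)) = v - (r + 1) := by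
      rw [Nat.sub_sub, Nat.cast_sub (by lia), ZMod.natCast_zmod_val, Nat.cast_succ]
    rw [hcast]
    refine congrArg f.1 (?_ : (-(r - (v - (r + 1))) : ZMod (2 * r + 1)) = v)
    linear_combination -cast_self_add_one (r := r)
  · have := v.val_lt
    lia

lemma unrollPair_gluePair (p : PathPair r) : unrollPair (gluePair p) = p := by
  refine Subtype.ext (Prod.ext (funext fun n => ?_) (funext fun n => ?_))
  · change (if n ≤ r then glueSeq r p.1.1 p.1.2 (r - n : ZMod (2 * r + 1)).val else 0) = p.1.1 n
    split_ifs with h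
    · rw [← Nat.cast_sub h, glueSeq_val_natCast p.2.2.1 (by lia)]
      simp [glueSeq, Nat.sub_sub_self h]
    · exact (p.2.1.1.eq_zero n (not_le.1 h)).symm
  · change (if n ≤ r then glueSeq r p.1.1 p.1.2 (-(r - n) : ZMod (2 * r + 1)).val else 0) = p.1.2 n
    split_ifs with h
    · rw [show (-(r - n) : ZMod (2 * r + 1)) = (n + r + 1 : ℕ) by
        push_cast; linear_combination -cast_self_add_one (r := r),
        glueSeq_val_natCast p.2.2.1 (by lia)]
      simp [glueSeq, show n + r + 1 - r - 1 = n by lia]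
    · exact (p.2.1.2.eq_zero n (not_le.1 h)).symm

/-- Weights on the odd cycle with independent support are the same as path pairs. -/
def unrollHomeomorph (r : ℕ) : IndWeights (oddCycle r) ≃ₜ PathPair r where
  toFun := unrollPair
  invFun := gluePair
  left_inv := gluePair_unrollPair
  right_inv := unrollPair_gluePair
  continuous_toFun := by
    have hneg : Continuous fun (f : ZMod (2 * r + 1) → ℝ) v => f (-v) := by fun_prop
    exact ((continuous_unroll.comp continuous_subtype_val).prodMk
      (continuous_unroll.comp (hneg.comp continuous_subtype_val))).subtype_mk _
  continuous_invFun := (continuous_pi fun v : ZMod (2 * r + 1) =>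
    (continuous_glueSeq v.val).comp continuous_subtype_val).subtype_mk _

lemma coneEquiv_indCone_oddCycle (r : ℕ) :
    ConeEquiv (indCone (cycleReflect r) (cycleReflect_invol r)) (pathCone r) := by
  have hzero : unroll (r := r) (fun _ => 0) = 0 := funext fun n => by simp [unroll]
  refine .of_homeomorph (unrollHomeomorph r) (fun f => Subtype.ext (Prod.ext rfl ?_))
    (Subtype.ext (Prod.ext hzero hzero))
  change unroll (fun v => f.1 (- -v : ZMod (2 * r + 1))) = unroll f.1
  simp only [neg_neg]

end OddCycle

section PathReduction

/-- The invariant of the first four entries of a sequence which survives their removal. -/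
def tent (z : ℕ → ℝ) : ℝ :=
  z 2 - z 1 - z 3 + z 0

/-- Replacement of the first four entries by a single one. -/
def collapse (z : ℕ → ℝ) : ℕ → ℝ
  | 0 => min (z 0) (z 3)
  | n + 1 => z (n + 4)

/-- Replacement of the first entry of `x` by four entries `q, _, _, p` of invariant `t`. -/
def extendSeq (p q t : ℝ) (x : ℕ → ℝ) : ℕ → ℝ
  | 0 => q
  | 1 => max (-(t + p - q)) 0
  | 2 => max (t + p - q) 0
  | 3 => p
  | n + 4 => x (n + 1)

/-- A right inverse of `z ↦ (collapse z, tent z)` up to homotopy. -/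
def expand (t : ℝ) (x : ℕ → ℝ) : ℕ → ℝ :=
  extendSeq (max (x 0 - max t 0) 0) (max (x 0 - max (-t) 0) 0) t x

/-- Reduction of the entries `0` and `3` by `c`, with the same invariant. -/
def shrink (c : ℝ) (z : ℕ → ℝ) : ℕ → ℝ :=
  extendSeq (max (z 3 - c) 0) (max (z 0 - c) 0) (tent z) (collapse z)

/-- Reduction of the first entry by `c`. -/
def lower (c : ℝ) (x : ℕ → ℝ) : ℕ → ℝ
  | 0 => max (x 0 - c) 0
  | n + 1 => x (n + 1)

lemma continuous_tent : Continuous tent := by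
  unfold tent
  fun_prop

lemma continuous_collapse : Continuous collapse := by
  refine continuous_pi fun n => ?_
  cases n <;> simp only [collapse] <;> fun_prop

lemma continuous_extendSeq :
    Continuous fun a : ℝ × ℝ × ℝ × (ℕ → ℝ) => extendSeq a.1 a.2.1 a.2.2.1 a.2.2.2 :=
  continuous_pi fun
    | 0 | 1 | 2 | 3 | n + 4 => by simp only [extendSeq]; fun_prop

lemma continuous_expand : Continuous fun a : ℝ × (ℕ → ℝ) => expand a.1 a.2 :=
  continuous_extendSeq.comp (by fun_prop : Continuous fun a : ℝ × (ℕ → ℝ) =>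
    (max (a.2 0 - max a.1 0) 0, max (a.2 0 - max (-a.1) 0) 0, a.1, a.2))

lemma continuous_shrink : Continuous fun a : ℝ × (ℕ → ℝ) => shrink a.1 a.2 := by
  have h₁ := continuous_tent
  have h₂ := continuous_collapse
  exact continuous_extendSeq.comp (by fun_prop : Continuous fun a : ℝ × (ℕ → ℝ) =>
    (max (a.2 3 - a.1) 0, max (a.2 0 - a.1) 0, tent a.2, collapse a.2))

lemma continuous_lower : Continuous fun a : ℝ × (ℕ → ℝ) => lower a.1 a.2 := by
  refine continuous_pi fun n => ?_
  cases n <;> simp only [lower] <;> fun_prop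

lemma tent_extendSeq (p q t : ℝ) (x : ℕ → ℝ) : tent (extendSeq p q t x) = t := by
  simp only [tent, extendSeq]
  grind

lemma tent_expand (t : ℝ) (x : ℕ → ℝ) : tent (expand t x) = t :=
  tent_extendSeq ..

lemma tent_shrink (c : ℝ) (z : ℕ → ℝ) : tent (shrink c z) = tent z :=
  tent_extendSeq ..

variable {r : ℕ} {c p q t : ℝ} {x z : ℕ → ℝ}

lemma collapse_expand (hx : 0 ≤ x 0) : collapse (expand t x) = lower |t| x := by
  funext n
  cases n with
  | zero => simp only [collapse, expand, extendSeq, lower]; grind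
  | succ n => rfl

lemma lower_zero (hx : 0 ≤ x 0) : lower 0 x = x := by
  funext n
  cases n with
  | zero => simpa [lower] using hx
  | succ n => rfl

namespace IsPathWeight

lemma collapse (hz : IsPathWeight (r + 3) z) : IsPathWeight r (collapse z) where
  nonneg
    | 0 => le_min (hz.nonneg 0) (hz.nonneg 3)
    | n + 1 => hz.nonneg (n + 4)
  eq_zero_or
    | 0 => (hz.eq_zero_or 3).imp_left fun h => by simp [Lovasz.collapse, h, hz.nonneg]
    | n + 1 => hz.eq_zero_or (n + 4)
  eq_zero
    | n + 1, hn => hz.eq_zero (n + 4) (by lia)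

lemma extendSeq (hx : IsPathWeight r x) (hp : 0 ≤ p) (hq : 0 ≤ q)
    (hqt : q = 0 ∨ 0 ≤ t + p - q) (hpt : p = 0 ∨ t + p - q ≤ 0) (hpx : p = 0 ∨ x 1 = 0) :
    IsPathWeight (r + 3) (extendSeq p q t x) where
  nonneg
    | 0 => hq
    | 1 | 2 => le_max_right _ _
    | 3 => hp
    | n + 4 => hx.nonneg (n + 1)
  eq_zero_or
    | 0 => hqt.imp_right fun h => max_eq_right (by linarith)
    | 1 => (le_total 0 (t + p - q)).imp (fun h => max_eq_right (by linarith)) max_eq_right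
    | 2 => (hpt.imp_right max_eq_right).symm
    | 3 => hpx
    | n + 4 => hx.eq_zero_or (n + 1)
  eq_zero
    | n + 4, hn => hx.eq_zero (n + 1) (by lia)

lemma expand (hx : IsPathWeight r x) : IsPathWeight (r + 3) (expand t x) := by
  have h0 := hx.nonneg 0
  refine hx.extendSeq (le_max_right _ _) (le_max_right _ _) (by grind) (by grind)
    ((hx.eq_zero_or 0).imp_left (by grind))

lemma shrink (hz : IsPathWeight (r + 3) z) (hc : 0 ≤ c) : IsPathWeight (r + 3) (shrink c z) := by
  have h (n) := hz.nonneg n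
  have h01 := hz.eq_zero_or 0
  have h23 := hz.eq_zero_or 2
  refine hz.collapse.extendSeq (le_max_right _ _) (le_max_right _ _) ?_ ?_
    ((hz.eq_zero_or 3).imp_left (by grind))
  · unfold tent; grind
  · unfold tent; grind

lemma lower (hx : IsPathWeight r x) (hc : 0 ≤ c) : IsPathWeight r (lower c x) where
  nonneg
    | 0 => le_max_right _ _
    | n + 1 => hx.nonneg (n + 1)
  eq_zero_or
    | 0 => (hx.eq_zero_or 0).imp_left fun h => by simp [Lovasz.lower, h, hc]
    | n + 1 => hx.eq_zero_or (n + 1)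
  eq_zero
    | n + 1, hn => hx.eq_zero (n + 1) hn

lemma shrink_zero (hz : IsPathWeight r z) : Lovasz.shrink 0 z = z := by
  have h (n) := hz.nonneg n
  have h12 := hz.eq_zero_or 1
  funext n
  match n with
  | 0 | 3 => simp [Lovasz.shrink, Lovasz.extendSeq, h]
  | 1 | 2 => simp only [Lovasz.shrink, Lovasz.extendSeq, tent]; grind
  | n + 4 => rfl

lemma shrink_abs_tent (hz : IsPathWeight r z) :
    Lovasz.shrink |tent z| z = Lovasz.expand (tent z) (Lovasz.collapse z) := by
  have h (n) := hz.nonneg n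
  have h01 := hz.eq_zero_or 0
  have h12 := hz.eq_zero_or 1
  have h23 := hz.eq_zero_or 2
  have h3 : max (z 3 - |tent z|) 0 = max (min (z 0) (z 3) - max (tent z) 0) 0 := by
    unfold tent; grind
  have h0 : max (z 0 - |tent z|) 0 = max (min (z 0) (z 3) - max (-tent z) 0) 0 := by
    unfold tent; grind
  rw [Lovasz.shrink, Lovasz.expand, h3, h0]
  rfl

end IsPathWeight

end PathReduction

section PathInduction

open Z2Cone

variable {r : ℕ}

lemma shrink_mem_pathPair (p : PathPair (r + 3)) {c c' : ℝ} (hc : 0 ≤ c) (hc' : 0 ≤ c')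
    (h : r = 0 → c = c') :
    (IsPathWeight (r + 3) (shrink c p.1.1) ∧ IsPathWeight (r + 3) (shrink c' p.1.2)) ∧
      shrink c p.1.1 (r + 3) = shrink c' p.1.2 (r + 3) ∧
      (shrink c p.1.1 0 = 0 ∨ shrink c' p.1.2 0 = 0) := by
  have h0 (b : ℝ) (hb : 0 ≤ b) (z : ℕ → ℝ) (hz : z 0 = 0) : shrink b z 0 = 0 := by
    simpa [shrink, extendSeq, hz] using hb
  obtain ⟨⟨z, z'⟩, ⟨hz, hz'⟩, hr, hzero⟩ := p
  refine ⟨⟨hz.shrink hc, hz'.shrink hc'⟩, ?_, hzero.imp (h0 c hc z) (h0 c' hc' z')⟩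
  cases r with
  | zero =>
    change max (z 3 - c) 0 = max (z' 3 - c') 0
    rw [h rfl, show z 3 = z' 3 from hr]
  | succ r => exact hr

/-- The removal of four entries of both halves, recorded by their invariants. -/
def collapsePair (r : ℕ) : C(PathPair (r + 4), PathPair (r + 1) × (ℝ × ℝ)) where
  toFun p := ⟨⟨(collapse p.1.1, collapse p.1.2), ⟨p.2.1.1.collapse, p.2.1.2.collapse⟩, p.2.2.1,
    p.2.2.2.imp (fun h => by simp [collapse, h, p.2.1.1.nonneg])
      fun h => by simp [collapse, h, p.2.1.2.nonneg]⟩, tent p.1.1, tent p.1.2⟩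
  continuous_toFun := by
    have h₁ := continuous_tent
    have h₂ := continuous_collapse
    fun_prop

/-- The homotopy inverse of `collapsePair`. -/
def expandPair (r : ℕ) : C(PathPair (r + 1) × (ℝ × ℝ), PathPair (r + 4)) where
  toFun a := ⟨(expand a.2.1 a.1.1.1, expand a.2.2 a.1.1.2),
    ⟨a.1.2.1.1.expand, a.1.2.1.2.expand⟩, a.1.2.2.1,
    a.1.2.2.2.imp (fun h => by simp [expand, extendSeq, h])
      fun h => by simp [expand, extendSeq, h]⟩
  continuous_toFun := by
    have h {f : PathPair (r + 1) × (ℝ × ℝ) → ℝ × (ℕ → ℝ)} (hf : Continuous f) :=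
      continuous_expand.comp hf
    exact ((h (f := fun a => (a.2.1, a.1.1.1)) (by fun_prop)).prodMk
      (h (f := fun a => (a.2.2, a.1.1.2)) (by fun_prop))).subtype_mk _

/-- The homotopy from the identity to `expandPair ∘ collapsePair`. -/
def shrinkPair (r : ℕ) : C(I × PathPair (r + 4), PathPair (r + 4)) where
  toFun a := ⟨(shrink (a.1 * |tent a.2.1.1|) a.2.1.1, shrink (a.1 * |tent a.2.1.2|) a.2.1.2),
    shrink_mem_pathPair a.2 (mul_nonneg a.1.2.1 (abs_nonneg _)) (mul_nonneg a.1.2.1 (abs_nonneg _))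
      (by simp)⟩
  continuous_toFun := by
    have ht := continuous_tent
    have h {f : I × PathPair (r + 4) → ℝ × (ℕ → ℝ)} (hf : Continuous f) :=
      continuous_shrink.comp hf
    exact ((h (f := fun a => (a.1 * |tent a.2.1.1|, a.2.1.1)) (by fun_prop)).prodMk
      (h (f := fun a => (a.1 * |tent a.2.1.2|, a.2.1.2)) (by fun_prop))).subtype_mk _

/-- The homotopy from the identity to `collapsePair ∘ expandPair`. -/
def lowerPair (r : ℕ) :
    C(I × PathPair (r + 1) × (ℝ × ℝ), PathPair (r + 1) × (ℝ × ℝ)) where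
  toFun a := ⟨⟨(lower (a.1 * |a.2.2.1|) a.2.1.1.1, lower (a.1 * |a.2.2.2|) a.2.1.1.2),
    ⟨a.2.1.2.1.1.lower (mul_nonneg a.1.2.1 (abs_nonneg _)),
      a.2.1.2.1.2.lower (mul_nonneg a.1.2.1 (abs_nonneg _))⟩, a.2.1.2.2.1,
    a.2.1.2.2.2.imp (fun h => by simpa [lower, h] using mul_nonneg a.1.2.1 (abs_nonneg _))
      fun h => by simpa [lower, h] using mul_nonneg a.1.2.1 (abs_nonneg _)⟩, a.2.2⟩
  continuous_toFun := by
    have h {f : I × PathPair (r + 1) × (ℝ × ℝ) → ℝ × (ℕ → ℝ)} (hf : Continuous f) :=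
      continuous_lower.comp hf
    exact (((h (f := fun a => (a.1 * |a.2.2.1|, a.2.1.1.1)) (by fun_prop)).prodMk
      (h (f := fun a => (a.1 * |a.2.2.2|, a.2.1.1.2)) (by fun_prop))).subtype_mk _).prodMk
        (by fun_prop)

lemma expand_zero_zero : expand 0 0 = 0 :=
  funext fun
    | 0 | 1 | 2 | 3 | _ + 4 => by simp [expand, extendSeq]

lemma tent_zero : tent 0 = 0 := by simp [tent]

lemma collapse_zero : collapse 0 = 0 :=
  funext fun
    | 0 | _ + 1 => by simp [collapse]

lemma isConeMap_collapsePair (r : ℕ) :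
    IsConeMap (A := pathCone (r + 4)) (B := (pathCone (r + 1)).prod (swapSquare ℝ))
      (collapsePair r) := by
  refine ⟨fun _ => rfl, fun p h => ?_⟩
  obtain ⟨hc, ht⟩ := Prod.ext_iff.1 h
  obtain ⟨hc₁, hc₂⟩ := Prod.ext_iff.1 (congrArg Subtype.val hc)
  obtain ⟨ht₁, ht₂⟩ := Prod.ext_iff.1 ht
  have key {z : ℕ → ℝ} (hz : IsPathWeight (r + 4) z) (hcz : collapse z = 0) (htz : tent z = 0) :
      z = 0 := by
    have := hz.shrink_abs_tent
    rwa [htz, hcz, abs_zero, hz.shrink_zero, expand_zero_zero] at this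
  exact Subtype.ext (Prod.ext (key p.2.1.1 hc₁ ht₁) (key p.2.1.2 hc₂ ht₂))

lemma isConeMap_expandPair (r : ℕ) :
    IsConeMap (A := (pathCone (r + 1)).prod (swapSquare ℝ)) (B := pathCone (r + 4))
      (expandPair r) := by
  refine ⟨fun _ => rfl, fun a h => ?_⟩
  have key {x : ℕ → ℝ} (hx : IsPathWeight (r + 1) x) {t : ℝ} (h0 : expand t x = 0) :
      x = 0 ∧ t = 0 := by
    have ht : t = 0 := by rw [← tent_expand t x, h0, tent_zero]
    refine ⟨?_, ht⟩
    rw [← lower_zero (hx.nonneg 0), ← abs_zero, ← ht, ← collapse_expand (hx.nonneg 0), h0,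
      collapse_zero]
  obtain ⟨h₁, h₂⟩ := Prod.ext_iff.1 (congrArg Subtype.val h)
  obtain ⟨hx₁, ht₁⟩ := key a.1.2.1.1 h₁
  obtain ⟨hx₂, ht₂⟩ := key a.1.2.1.2 h₂
  exact Prod.ext (Subtype.ext (Prod.ext hx₁ hx₂)) (Prod.ext ht₁ ht₂)

lemma homotopicWith_expandPair_comp_collapsePair (r : ℕ) :
    ContinuousMap.HomotopicWith (X := pathCone (r + 4)) (Y := pathCone (r + 4))
      ((expandPair r).comp (collapsePair r)) (ContinuousMap.id _) IsConeMap := by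
  refine .symm (homotopicWith_isConeMap (A := pathCone (r + 4)) (B := pathCone (r + 4))
    (shrinkPair r) (fun p => Subtype.ext ?_) (fun p => Subtype.ext ?_) (fun _ _ => rfl)
    fun t p h => ?_)
  · change (shrink ((0 : ℝ) * _) _, shrink ((0 : ℝ) * _) _) = p.1
    rw [zero_mul, zero_mul, p.2.1.1.shrink_zero, p.2.1.2.shrink_zero]
  · change (shrink ((1 : ℝ) * _) _, shrink ((1 : ℝ) * _) _) =
      (expand (tent p.1.1) (collapse p.1.1), expand (tent p.1.2) (collapse p.1.2))
    rw [one_mul, one_mul, p.2.1.1.shrink_abs_tent, p.2.1.2.shrink_abs_tent]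
  · have key {z : ℕ → ℝ} (hz : IsPathWeight (r + 4) z) (h0 : shrink (t * |tent z|) z = 0) :
        z = 0 := by
      have ht : tent z = 0 := by rw [← tent_shrink (t * |tent z|) z, h0, tent_zero]
      rwa [ht, abs_zero, mul_zero, hz.shrink_zero] at h0
    obtain ⟨h₁, h₂⟩ := Prod.ext_iff.1 (congrArg Subtype.val h)
    exact Subtype.ext (Prod.ext (key p.2.1.1 h₁) (key p.2.1.2 h₂))

lemma homotopicWith_collapsePair_comp_expandPair (r : ℕ) :
    ContinuousMap.HomotopicWith (X := (pathCone (r + 1)).prod (swapSquare ℝ))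
      (Y := (pathCone (r + 1)).prod (swapSquare ℝ))
      ((collapsePair r).comp (expandPair r)) (ContinuousMap.id _) IsConeMap := by
  refine .symm (homotopicWith_isConeMap (A := (pathCone (r + 1)).prod (swapSquare ℝ))
    (B := (pathCone (r + 1)).prod (swapSquare ℝ)) (lowerPair r) (fun a => ?_) (fun a => ?_)
    (fun _ _ => rfl) fun t a h => ?_)
  · refine Prod.ext (Subtype.ext ?_) rfl
    change (lower ((0 : ℝ) * _) _, lower ((0 : ℝ) * _) _) = a.1.1
    rw [zero_mul, zero_mul, lower_zero (a.1.2.1.1.nonneg 0), lower_zero (a.1.2.1.2.nonneg 0)]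
  · refine Prod.ext (Subtype.ext ?_) (Prod.ext (tent_expand ..).symm (tent_expand ..).symm)
    change (lower ((1 : ℝ) * _) _, lower ((1 : ℝ) * _) _) =
      (collapse (expand a.2.1 a.1.1.1), collapse (expand a.2.2 a.1.1.2))
    rw [one_mul, one_mul, collapse_expand (a.1.2.1.1.nonneg 0),
      collapse_expand (a.1.2.1.2.nonneg 0)]
  · obtain ⟨hx, ht⟩ := Prod.ext_iff.1 h
    have key {x : ℕ → ℝ} (hx : IsPathWeight (r + 1) x) {s : ℝ} (hs : s = 0)
        (h0 : lower (t * |s|) x = 0) : x = 0 := by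
      rwa [hs, abs_zero, mul_zero, lower_zero (hx.nonneg 0)] at h0
    obtain ⟨h₁, h₂⟩ := Prod.ext_iff.1 (congrArg Subtype.val hx)
    obtain ⟨ht₁, ht₂⟩ := Prod.ext_iff.1 ht
    exact Prod.ext (Subtype.ext (Prod.ext (key a.1.2.1.1 ht₁ h₁) (key a.1.2.1.2 ht₂ h₂))) ht

lemma coneEquiv_pathCone_add_four (r : ℕ) :
    ConeEquiv (pathCone (r + 4)) ((pathCone (r + 1)).prod (swapSquare ℝ)) :=
  ⟨collapsePair r, expandPair r, isConeMap_collapsePair r, isConeMap_expandPair r,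
    homotopicWith_expandPair_comp_collapsePair r, homotopicWith_collapsePair_comp_expandPair r⟩

end PathInduction

section PathBase

open Z2Cone

/-- The union of the rays from the origin through `(1, 0)`, `(0, 1)` and `(-1, -1)`. -/
abbrev Tripod : Type := {p : ℝ × ℝ // p.1 = min p.2 0 ∨ p.2 = min p.1 0}

/-- The tripod with the exchange of its first two rays. -/
def tripod : Z2Cone where
  carrier := Tripod
  pt := ⟨0, .inl (min_self 0).symm⟩
  inv := {
    toFun := fun p => ⟨p.1.swap, p.2.symm⟩
    continuous_toFun := by fun_prop }
  inv_inv _ := rfl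
  inv_pt := rfl

/-- The weight on the path `0, 1` with difference `a`. -/
def edgeSeq (a : ℝ) : ℕ → ℝ
  | 0 => max a 0
  | 1 => max (-a) 0
  | _ => 0

lemma isPathWeight_edgeSeq (a : ℝ) : IsPathWeight 1 (edgeSeq a) where
  nonneg
    | 0 | 1 => le_max_right _ _
    | _ + 2 => le_rfl
  eq_zero_or
    | 0 => (le_total a 0).imp max_eq_right fun h => max_eq_right (neg_nonpos.2 h)
    | _ + 1 => .inr rfl
  eq_zero
    | _ + 2, _ => rfl

lemma IsPathWeight.edgeSeq_sub {z : ℕ → ℝ} (hz : IsPathWeight 1 z) : edgeSeq (z 0 - z 1) = z := by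
  have h (n) := hz.nonneg n
  have h01 := hz.eq_zero_or 0
  funext n
  match n with
  | 0 | 1 => simp only [edgeSeq]; grind
  | n + 2 => exact (hz.eq_zero _ (by lia)).symm

/-- The difference map from path pairs of length one to the tripod. -/
def pathPairHomeomorphTripod : PathPair 1 ≃ₜ Tripod where
  toFun p := ⟨(p.1.1 0 - p.1.1 1, p.1.2 0 - p.1.2 1), by
    obtain ⟨⟨z, z'⟩, ⟨hz, hz'⟩, h1, h0⟩ := p
    have := hz.nonneg
    have := hz'.nonneg
    have := hz.eq_zero_or 0
    have := hz'.eq_zero_or 0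
    grind⟩
  invFun a := ⟨(edgeSeq a.1.1, edgeSeq a.1.2), ⟨isPathWeight_edgeSeq _, isPathWeight_edgeSeq _⟩, by
    have := a.2
    simp only [edgeSeq]
    grind⟩
  left_inv p := Subtype.ext (Prod.ext p.2.1.1.edgeSeq_sub p.2.1.2.edgeSeq_sub)
  right_inv a := by ext <;> exact max_zero_sub_max_neg_zero_eq_self _
  continuous_toFun := by fun_prop
  continuous_invFun := by
    have h : Continuous edgeSeq := continuous_pi fun
      | 0 | 1 | n + 2 => by simp only [edgeSeq]; fun_prop
    fun_prop

lemma coneEquiv_pathCone_one : ConeEquiv (pathCone 1) tripod :=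
  .of_homeomorph pathPairHomeomorphTripod (fun _ => rfl)
    (Subtype.ext (Prod.ext (sub_self 0) (sub_self 0)))

/-- The weight on the path `0, 1, 2` with entry `m` at `2` and alternating sum `-t`. -/
def bentSeq (m t : ℝ) : ℕ → ℝ
  | 0 => max (-t) 0 - m
  | 1 => max t 0
  | 2 => m
  | _ => 0

lemma isPathWeight_bentSeq {m t : ℝ} (hm : 0 ≤ m) (hmt : m ≤ max (-t) 0) :
    IsPathWeight 2 (bentSeq m t) where
  nonneg
    | 0 => sub_nonneg.2 hmt
    | 1 => le_max_right _ _
    | 2 => hm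
    | _ + 3 => le_rfl
  eq_zero_or
    | 0 | 1 => by simp only [bentSeq]; grind
    | _ + 2 => .inr rfl
  eq_zero
    | _ + 3, _ => rfl

lemma IsPathWeight.bentSeq_sub {z : ℕ → ℝ} (hz : IsPathWeight 2 z) :
    bentSeq (z 2) (z 1 - z 0 - z 2) = z := by
  have h (n) := hz.nonneg n
  have h01 := hz.eq_zero_or 0
  have h12 := hz.eq_zero_or 1
  funext n
  match n with
  | 0 | 1 => simp only [bentSeq]; grind
  | 2 => rfl
  | n + 3 => exact (hz.eq_zero _ (by lia)).symm

/-- The alternating sums identify path pairs of length two with the plane. -/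
def pathPairHomeomorphProd : PathPair 2 ≃ₜ ℝ × ℝ where
  toFun p := (p.1.1 1 - p.1.1 0 - p.1.1 2, p.1.2 1 - p.1.2 0 - p.1.2 2)
  invFun a := ⟨(bentSeq (min (max (-a.1) 0) (max (-a.2) 0)) a.1,
      bentSeq (min (max (-a.1) 0) (max (-a.2) 0)) a.2),
    ⟨isPathWeight_bentSeq (by simp) (min_le_left _ _),
      isPathWeight_bentSeq (by simp) (min_le_right _ _)⟩, rfl, by
    simp only [bentSeq]
    grind⟩
  left_inv p := by
    obtain ⟨⟨z, z'⟩, ⟨hz, hz'⟩, h2, h0⟩ := p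
    have hm : min (max (-(z 1 - z 0 - z 2)) 0) (max (-(z' 1 - z' 0 - z' 2)) 0) = z 2 := by
      have := hz.nonneg
      have := hz'.nonneg
      have := hz.eq_zero_or 0
      have := hz'.eq_zero_or 0
      have := hz.eq_zero_or 1
      have := hz'.eq_zero_or 1
      grind
    refine Subtype.ext (Prod.ext ?_ ?_)
    · exact (congrArg (bentSeq · _) hm).trans hz.bentSeq_sub
    · exact (congrArg (bentSeq · _) (hm.trans h2)).trans hz'.bentSeq_sub
  right_inv a := by
    have h (m t : ℝ) : max t 0 - (max (-t) 0 - m) - m = t := by grind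
    exact Prod.ext (h ..) (h ..)
  continuous_toFun := by fun_prop
  continuous_invFun := by
    have h : Continuous fun a : ℝ × ℝ => bentSeq a.1 a.2 := continuous_pi fun
      | 0 | 1 | 2 | n + 3 => by simp only [bentSeq]; fun_prop
    exact ((h.comp (by fun_prop : Continuous fun a : ℝ × ℝ =>
      (min (max (-a.1) 0) (max (-a.2) 0), a.1))).prodMk (h.comp (by fun_prop : Continuous
        fun a : ℝ × ℝ => (min (max (-a.1) 0) (max (-a.2) 0), a.2)))).subtype_mk _

lemma coneEquiv_pathCone_two : ConeEquiv (pathCone 2) (swapSquare ℝ) :=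
  have h : (0 : ℝ) - 0 - 0 = 0 := by simp
  .of_homeomorph (B := swapSquare ℝ) pathPairHomeomorphProd (fun _ => rfl) (Prod.ext h h)

/-- The invariants of both halves of a path pair of length three. -/
def tentPair : C(PathPair 3, ℝ × ℝ) where
  toFun p := (tent p.1.1, tent p.1.2)
  continuous_toFun := by
    have := continuous_tent
    fun_prop

/-- A section of `tentPair`. -/
def tentSection : C(ℝ × ℝ, PathPair 3) where
  toFun t := ⟨(extendSeq 0 0 t.1 0, extendSeq 0 0 t.2 0), by
    have h (s : ℝ) : IsPathWeight 3 (extendSeq 0 0 s 0) :=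
      (isPathWeight_zero 0).extendSeq le_rfl le_rfl (.inl rfl) (.inl rfl) (.inl rfl)
    exact ⟨⟨h _, h _⟩, rfl, .inl rfl⟩⟩
  continuous_toFun := by
    have h (f : ℝ × ℝ → ℝ) (hf : Continuous f) : Continuous fun t => extendSeq 0 0 (f t) 0 :=
      continuous_extendSeq.comp (by fun_prop : Continuous fun t =>
        ((0 : ℝ), (0 : ℝ), f t, (0 : ℕ → ℝ)))
    exact ((h _ continuous_fst).prodMk (h _ continuous_snd)).subtype_mk _

/-- The homotopy from the identity to `tentSection ∘ tentPair`. -/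
def tentHomotopy : C(I × PathPair 3, PathPair 3) where
  toFun a :=
    have hc : 0 ≤ a.1 * (a.2.1.1 0 + a.2.1.2 0 + a.2.1.1 3) := mul_nonneg a.1.2.1 (add_nonneg
      (add_nonneg (a.2.2.1.1.nonneg 0) (a.2.2.1.2.nonneg 0)) (a.2.2.1.1.nonneg 3))
    ⟨_, shrink_mem_pathPair a.2 hc hc fun _ => rfl⟩
  continuous_toFun := by
    have h {f : I × PathPair 3 → ℝ × (ℕ → ℝ)} (hf : Continuous f) := continuous_shrink.comp hf
    exact ((h (f := fun a => (a.1 * (a.2.1.1 0 + a.2.1.2 0 + a.2.1.1 3), a.2.1.1))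
      (by fun_prop)).prodMk
        (h (f := fun a => (a.1 * (a.2.1.1 0 + a.2.1.2 0 + a.2.1.1 3), a.2.1.2))
          (by fun_prop))).subtype_mk _

lemma IsPathWeight.shrink_of_le {z : ℕ → ℝ} {c : ℝ} (hz : IsPathWeight 3 z) (h0 : z 0 ≤ c)
    (h3 : z 3 ≤ c) : Lovasz.shrink c z = Lovasz.extendSeq 0 0 (tent z) 0 := by
  rw [Lovasz.shrink, max_eq_right (sub_nonpos.2 h0), max_eq_right (sub_nonpos.2 h3)]
  funext n
  match n with
  | 0 | 1 | 2 | 3 => rfl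
  | n + 4 => exact hz.eq_zero _ (by lia)

lemma PathPair.eq_zero_of_tent (p : PathPair 3) (h : tent p.1.1 = 0) (h' : tent p.1.2 = 0) :
    p.1 = 0 := by
  obtain ⟨⟨z, z'⟩, ⟨hz, hz'⟩, h3, h0⟩ := p
  simp only [tent] at h h'
  have key {n : ℕ} (hn : n ≤ 3) : z n = 0 ∧ z' n = 0 := by
    have := hz.nonneg
    have := hz'.nonneg
    have := hz.eq_zero_or 0
    have := hz'.eq_zero_or 0
    have := hz.eq_zero_or 1
    have := hz'.eq_zero_or 1
    have := hz.eq_zero_or 2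
    have := hz'.eq_zero_or 2
    interval_cases n <;> grind
  refine Prod.ext (funext fun n => ?_) (funext fun n => ?_)
  · exact (le_or_gt n 3).elim (fun hn => (key hn).1) (hz.eq_zero n)
  · exact (le_or_gt n 3).elim (fun hn => (key hn).2) (hz'.eq_zero n)

lemma homotopicWith_tentSection_comp_tentPair :
    ContinuousMap.HomotopicWith (X := pathCone 3) (Y := pathCone 3)
      (tentSection.comp tentPair) (ContinuousMap.id _) IsConeMap := by
  refine .symm (homotopicWith_isConeMap (A := pathCone 3) (B := pathCone 3) tentHomotopy
    (fun p => Subtype.ext ?_) (fun p => Subtype.ext ?_) (fun t p => Subtype.ext ?_) fun t p h => ?_)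
  · change (shrink ((0 : ℝ) * _) _, shrink ((0 : ℝ) * _) _) = p.1
    rw [zero_mul, p.2.1.1.shrink_zero, p.2.1.2.shrink_zero]
  · have h₁ := p.2.1.1.nonneg
    have h₂ := p.2.1.2.nonneg
    have h₃ := p.2.2.1
    change (shrink ((1 : ℝ) * _) _, shrink ((1 : ℝ) * _) _) =
      (extendSeq 0 0 (tent p.1.1) 0, extendSeq 0 0 (tent p.1.2) 0)
    rw [p.2.1.1.shrink_of_le, p.2.1.2.shrink_of_le] <;> linarith [h₁ 0, h₁ 3, h₂ 0, h₂ 3]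
  · have hc : p.1.2 0 + p.1.1 0 + p.1.2 3 = p.1.1 0 + p.1.2 0 + p.1.1 3 := by
      rw [add_comm (p.1.2 0), p.2.2.1]
    exact congrArg (fun s => (shrink (t * s) p.1.2, shrink (t * s) p.1.1)) hc
  · obtain ⟨h₁, h₂⟩ := Prod.ext_iff.1 (congrArg Subtype.val h)
    refine Subtype.ext (PathPair.eq_zero_of_tent p ?_ ?_)
    · exact (tent_shrink ..).symm.trans ((congrArg tent h₁).trans tent_zero)
    · exact (tent_shrink ..).symm.trans ((congrArg tent h₂).trans tent_zero)

lemma coneEquiv_pathCone_three : ConeEquiv (pathCone 3) (swapSquare ℝ) := by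
  have hcomp (t : ℝ × ℝ) : tentPair (tentSection t) = t :=
    Prod.ext (tent_extendSeq 0 0 t.1 0) (tent_extendSeq 0 0 t.2 0)
  refine ⟨tentPair, tentSection, ⟨fun _ => rfl, fun p h => ?_⟩, ⟨fun _ => rfl, fun t h => ?_⟩,
    homotopicWith_tentSection_comp_tentPair, homotopicWith_isConeMap
      (A := swapSquare ℝ) (B := swapSquare ℝ) .snd (fun t => (hcomp t).symm) (fun _ => rfl)
      (fun _ _ => rfl) (fun _ _ => id)⟩
  · obtain ⟨h₁, h₂⟩ := Prod.ext_iff.1 h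
    exact Subtype.ext (PathPair.eq_zero_of_tent p h₁ h₂)
  · obtain ⟨h₁, h₂⟩ := Prod.ext_iff.1 (congrArg Subtype.val h)
    refine Prod.ext ?_ ?_
    · exact (tent_extendSeq ..).symm.trans ((congrArg tent h₁).trans tent_zero)
    · exact (tent_extendSeq ..).symm.trans ((congrArg tent h₂).trans tent_zero)

lemma coneEquiv_pathCone_swapSquare_add_three {r j : ℕ}
    (h : ConeEquiv (pathCone (r + 1)) (swapSquare (Fin j → ℝ))) :
    ConeEquiv (pathCone (r + 4)) (swapSquare (Fin (j + 1) → ℝ)) :=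
  (coneEquiv_pathCone_add_four r).trans ((h.prod (.refl _)).trans
    ((coneEquiv_swapSquare_prod _ _).trans (coneEquiv_swapSquare_of_finrank_eq (by simp))))

lemma coneEquiv_pathCone_three_mul_add_two (j : ℕ) :
    ConeEquiv (pathCone (3 * j + 2)) (swapSquare (Fin (j + 1) → ℝ)) := by
  induction j with
  | zero => exact coneEquiv_pathCone_two.trans (coneEquiv_swapSquare_of_finrank_eq (by simp))
  | succ j ih => exact coneEquiv_pathCone_swapSquare_add_three ih

lemma coneEquiv_pathCone_three_mul_add_three (j : ℕ) :
    ConeEquiv (pathCone (3 * j + 3)) (swapSquare (Fin (j + 1) → ℝ)) := by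
  induction j with
  | zero => exact coneEquiv_pathCone_three.trans (coneEquiv_swapSquare_of_finrank_eq (by simp))
  | succ j ih => exact coneEquiv_pathCone_swapSquare_add_three ih

lemma coneEquiv_pathCone_three_mul_add_one (j : ℕ) :
    ConeEquiv (pathCone (3 * j + 1)) (tripod.prod (swapSquare (Fin j → ℝ))) := by
  induction j with
  | zero => exact coneEquiv_pathCone_one.trans (coneEquiv_prod_swapSquare _ _)
  | succ j ih =>
    exact (coneEquiv_pathCone_add_four _).trans ((ih.prod (.refl _)).trans
      ((coneEquiv_prod_assoc _ _ _).trans (.prod (.refl _) ((coneEquiv_swapSquare_prod _ _).trans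
        (coneEquiv_swapSquare_of_finrank_eq (by simp))))))

end PathBase

section ReflectCone

open Z2Cone

/-- The product `E × F` with the reflection in `E`, as a cone with apex the origin. -/
def reflectCone (E F : Type) [NormedAddCommGroup E] [NormedAddCommGroup F] : Z2Cone where
  carrier := E × F
  pt := 0
  inv := (ContinuousMap.id E).prodMap ⟨fun y => -y, continuous_neg⟩
  inv_inv p := Prod.ext rfl (neg_neg p.2)
  inv_pt := Prod.ext rfl neg_zero

variable (E F : Type) [NormedAddCommGroup E] [NormedSpace ℝ E] [NormedAddCommGroup F]
  [NormedSpace ℝ F]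

lemma coneEquiv_swapSquare_reflectCone : ConeEquiv (swapSquare E) (reflectCone E E) := by
  let e : E × E ≃ₜ E × E := {
    toFun := fun p => (p.1 + p.2, p.1 - p.2)
    invFun := fun p => ((2⁻¹ : ℝ) • (p.1 + p.2), (2⁻¹ : ℝ) • (p.1 - p.2))
    left_inv := fun p => Prod.ext (by dsimp only; module) (by dsimp only; module)
    right_inv := fun p => Prod.ext (by dsimp only; module) (by dsimp only; module)
    continuous_toFun := by fun_prop
    continuous_invFun := by fun_prop }
  exact .of_homeomorph (A := swapSquare E) (B := reflectCone E E) e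
    (fun p => Prod.ext (add_comm p.2 p.1) (neg_sub p.1 p.2).symm)
    (Prod.ext (add_zero (0 : E)) (sub_zero (0 : E)))

/-- The gauge of `reflectCone E F` given by the sum of the norms. -/
def sumGauge : Gauge (reflectCone E F) where
  scale := ⟨fun a : NNReal × (E × F) => (a.1 : ℝ) • a.2,
    show Continuous fun a : NNReal × (E × F) => (a.1 : ℝ) • a.2 by fun_prop⟩
  norm := ⟨fun p : E × F => ‖p.1‖₊ + ‖p.2‖₊, by fun_prop⟩
  scale_one := fun p : E × F => one_smul ℝ p
  scale_inv c p := Prod.ext rfl (smul_neg (c : ℝ) p.2)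
  norm_scale c := fun p : E × F => by
    change ‖(c : ℝ) • p.1‖₊ + ‖(c : ℝ) • p.2‖₊ = c * (‖p.1‖₊ + ‖p.2‖₊)
    rw [nnnorm_smul, nnnorm_smul, NNReal.nnnorm_eq, mul_add]
  norm_inv p := congrArg (‖p.1‖₊ + ·) (nnnorm_neg p.2)
  norm_eq_zero := fun p : E × F => by
    change ‖p.1‖₊ + ‖p.2‖₊ = 0 ↔ p = 0
    rw [add_eq_zero, nnnorm_eq_zero, nnnorm_eq_zero, Prod.ext_iff, Prod.fst_zero, Prod.snd_zero]

end ReflectCone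

section Join

open Z2Cone

lemma exists_nSphere_norm_smul_eq {d : ℕ} (a : EuclideanSpace ℝ (Fin (d + 1))) :
    ∃ x : nSphere d, ‖a‖ • x.1 = a := by
  by_cases ha : a = 0
  · exact ⟨northPole d, by simp [ha]⟩
  · exact ⟨⟨‖a‖⁻¹ • a, by simpa using norm_smul_inv_norm (𝕜 := ℝ) ha⟩,
      smul_inv_smul₀ (norm_ne_zero_iff.2 ha) a⟩

@[simp]
lemma norm_nSphere {d : ℕ} (x : nSphere d) : ‖x.1‖ = 1 :=
  mem_sphere_zero_iff_norm.1 x.2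

variable (d d' : ℕ)

/-- The link of the sum gauge, in which points are joined along straight lines. -/
abbrev JoinLink : Type :=
  (sumGauge (EuclideanSpace ℝ (Fin (d + 1))) (EuclideanSpace ℝ (Fin (d' + 1)))).Link

/-- The point of the join at time `t` between `x` and `y`, realised as `((1 - t) x, t y)`. -/
def joinPoint : C(nSphere d × nSphere d' × I, JoinLink d d') where
  toFun a := ⟨((1 - a.2.2 : ℝ) • a.1.1, (a.2.2 : ℝ) • a.2.1.1), NNReal.eq <| by
    change ‖(1 - a.2.2 : ℝ) • a.1.1‖ + ‖(a.2.2 : ℝ) • a.2.1.1‖ = 1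
    rw [norm_smul, norm_smul, norm_nSphere, norm_nSphere, Real.norm_of_nonneg a.2.2.2.1,
      Real.norm_of_nonneg (sub_nonneg.2 a.2.2.2.2)]
    ring⟩
  continuous_toFun := (by fun_prop : Continuous fun a : nSphere d × nSphere d' × I =>
    ((1 - a.2.2 : ℝ) • a.1.1, (a.2.2 : ℝ) • a.2.1.1)).subtype_mk _

variable {d d'}

lemma joinPoint_eq_joinPoint {x x' : nSphere d} {y y' : nSphere d'} {t t' : I} :
    joinPoint d d' (x, y, t) = joinPoint d d' (x', y', t') ↔
      t = t' ∧ (t = 1 ∨ x = x') ∧ (t = 0 ∨ y = y') := by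
  have hcoe : joinPoint d d' (x, y, t) = joinPoint d d' (x', y', t') ↔
      (1 - t : ℝ) • x.1 = (1 - t' : ℝ) • x'.1 ∧ (t : ℝ) • y.1 = (t' : ℝ) • y'.1 :=
    Subtype.ext_iff.trans Prod.ext_iff
  rw [hcoe]
  constructor
  · rintro ⟨hx, hy⟩
    obtain rfl : t = t' := by
      have h := congrArg norm hy
      simp only [norm_smul, norm_nSphere, mul_one] at h
      exact Subtype.ext (by rwa [Real.norm_of_nonneg t.2.1, Real.norm_of_nonneg t'.2.1] at h)
    refine ⟨rfl, or_iff_not_imp_left.2 fun ht => ?_, or_iff_not_imp_left.2 fun ht => ?_⟩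
    · exact Subtype.ext (smul_right_injective _ (sub_ne_zero.2 fun h => ht (Subtype.ext h.symm)) hx)
    · exact Subtype.ext (smul_right_injective _ (fun h => ht (Subtype.ext h)) hy)
  · rintro ⟨rfl, hx, hy⟩
    exact ⟨hx.elim (fun h => by simp [h]) (fun h => by rw [h]),
      hy.elim (fun h => by simp [h]) (fun h => by rw [h])⟩

lemma linkInv_joinPoint (x : nSphere d) (y : nSphere d') (t : I) :
    (sumGauge _ _).linkInv (joinPoint d d' (x, y, t)) = joinPoint d d' (x, nSphereNeg d' y, t) :=
  Subtype.ext (Prod.ext rfl (smul_neg (t : ℝ) y.1).symm)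

lemma joinPoint_surjective : Function.Surjective (joinPoint d d') := by
  rintro ⟨⟨a, b⟩, hab⟩
  have hab : ‖a‖ + ‖b‖ = 1 := congrArg NNReal.toReal hab
  obtain ⟨x, hx⟩ := exists_nSphere_norm_smul_eq a
  obtain ⟨y, hy⟩ := exists_nSphere_norm_smul_eq b
  refine ⟨(x, y, ⟨‖b‖, norm_nonneg b, by linarith [norm_nonneg a]⟩), Subtype.ext (Prod.ext ?_ hy)⟩
  change (1 - ‖b‖) • x.1 = a
  rw [← eq_sub_of_add_eq hab, hx]

/-- The quotient map onto the join of a sphere and a projective space. -/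
def joinMk (d d' : ℕ) : C(nSphere d × nSphere d' × I, TopJoin (nSphere d) (RPspace d')) :=
  ContinuousMap.comp ⟨Quotient.mk _, continuous_quotient_mk'⟩
    ((ContinuousMap.id _).prodMap ((Z2Quotient.mk (nSphereNeg_invol d')).prodMap
      (ContinuousMap.id _)))

lemma isQuotientMap_joinMk : IsQuotientMap (joinMk d d') :=
  isQuotientMap_quotient_mk'.comp
    (IsOpenQuotientMap.id.prodMap
      (Z2Quotient.isOpenQuotientMap_mk.prodMap .id)).isQuotientMap

lemma joinMk_eq_joinMk {x x' : nSphere d} {y y' : nSphere d'} {t t' : I} :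
    joinMk d d' (x, y, t) = joinMk d d' (x', y', t') ↔
      t = t' ∧ (t = 1 ∨ x = x') ∧ (t = 0 ∨ y' = y ∨ y' = nSphereNeg d' y) := by
  rw [← Z2Quotient.mk_eq_mk (hτ := nSphereNeg_invol d')]
  set u := Z2Quotient.mk (nSphereNeg_invol d') y
  set u' := Z2Quotient.mk (nSphereNeg_invol d') y'
  have hsetoid : joinMk d d' (x, y, t) = joinMk d d' (x', y', t') ↔ (x, u, t) = (x', u', t') ∨
      (t = 0 ∧ t' = 0 ∧ x = x') ∨ (t = 1 ∧ t' = 1 ∧ u = u') := Quotient.eq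
  have h01 : (0 : I) ≠ 1 := zero_ne_one
  rw [hsetoid, Prod.mk.injEq, Prod.mk.injEq]
  grind

/-- The quotient map from the same space onto the orbit space of the link. -/
def joinLinkMk (d d' : ℕ) : C(nSphere d × nSphere d' × I,
    Z2Quotient (JoinLink d d') (sumGauge _ _).linkInv Gauge.linkInv_linkInv) :=
  (Z2Quotient.mk Gauge.linkInv_linkInv).comp (joinPoint d d')

lemma isQuotientMap_joinLinkMk : IsQuotientMap (joinLinkMk d d') := by
  have : T2Space (reflectCone (EuclideanSpace ℝ (Fin (d + 1)))
    (EuclideanSpace ℝ (Fin (d' + 1)))) := inferInstanceAs (T2Space (_ × _))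
  exact .of_surjective_continuous
    (Z2Quotient.isOpenQuotientMap_mk.surjective.comp joinPoint_surjective)
    (joinLinkMk d d').continuous

lemma joinLinkMk_eq_joinLinkMk {a b : nSphere d × nSphere d' × I} :
    joinLinkMk d d' a = joinLinkMk d d' b ↔ joinMk d d' a = joinMk d d' b := by
  obtain ⟨x, y, t⟩ := a
  obtain ⟨x', y', t'⟩ := b
  refine Z2Quotient.mk_eq_mk.trans ?_
  rw [linkInv_joinPoint, joinMk_eq_joinMk, joinPoint_eq_joinPoint, joinPoint_eq_joinPoint]
  grind

lemma nonempty_homotopyEquiv_swapSquare_topJoin {E : Type} [NormedAddCommGroup E]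
    [NormedSpace ℝ E] [FiniteDimensional ℝ E] (hE : Module.finrank ℝ E = d + 1) :
    Nonempty (ContinuousMap.HomotopyEquiv (swapSquare E).PuncturedQuotient
      (TopJoin (nSphere d) (RPspace d))) := by
  have hcone := (coneEquiv_swapSquare_of_finrank_eq
    (hE.trans (finrank_euclideanSpace_fin (𝕜 := ℝ)).symm)).trans
      (coneEquiv_swapSquare_reflectCone _)
  obtain ⟨e₁⟩ := hcone.nonempty_homotopyEquiv_puncturedQuotient
  obtain ⟨e₂⟩ := (sumGauge (EuclideanSpace ℝ (Fin (d + 1)))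
    (EuclideanSpace ℝ (Fin (d + 1)))).nonempty_homotopyEquiv_puncturedQuotient_link
  obtain ⟨e₃⟩ := nonempty_homotopyEquiv_of_isQuotientMap isQuotientMap_joinLinkMk
    isQuotientMap_joinMk (.refl _) (fun _ _ _ => id) (fun _ _ _ => id)
    (fun _ _ => joinLinkMk_eq_joinLinkMk.1) (fun _ _ => joinLinkMk_eq_joinLinkMk.2)
  exact ⟨(e₁.trans e₂).trans e₃⟩

end Join

section SpherePush

open NormedSpace

variable {V : Type*} [NormedAddCommGroup V] [NormedSpace ℝ V]

/-- At time `t`, the sum of a nonnegative multiple of `y` and a nonnegative multiple of `b`, chosen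
so that at time `1` the zeros of the function `a` are moved onto the ray through `b`. -/
def pushVec (a : V → ℝ) (b : V) (t : ℝ) (y : V) : V :=
  (1 - t + t * a y) • y + (t * ‖y + b‖) • b

variable {a : V → ℝ} {b y : V} {t : ℝ}

lemma pushVec_ne_zero (ha : ∀ y, 0 ≤ a y) (hab : a (-b) = 1) (hb : ‖b‖ = 1) (ht : t ∈ I)
    (hy : ‖y‖ = 1) : pushVec a b t y ≠ 0 := by
  intro h
  have hc : 0 ≤ 1 - t + t * a y := add_nonneg (sub_nonneg.2 ht.2) (mul_nonneg ht.1 (ha y))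
  have hnorm : 1 - t + t * a y = t * ‖y + b‖ := by
    have := congrArg norm (eq_neg_of_add_eq_zero_left h)
    rwa [norm_neg, norm_smul, norm_smul, hy, hb, mul_one, mul_one, Real.norm_of_nonneg hc,
      Real.norm_of_nonneg (mul_nonneg ht.1 (norm_nonneg _))] at this
  have hyb : y = -b := by
    rw [pushVec, ← hnorm, ← smul_add, smul_eq_zero] at h
    refine h.elim (fun hc => ?_) eq_neg_of_add_eq_zero_left
    have ht1 : t = 1 := by linarith [ht.2, mul_nonneg ht.1 (ha y)]
    rw [hc, ht1, one_mul, eq_comm, norm_eq_zero] at hnorm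
    exact eq_neg_of_add_eq_zero_left hnorm
  rw [hyb, hab, neg_add_cancel, norm_zero] at hnorm
  linarith

lemma normalize_pushVec_of_eq_zero (hab : a (-b) = 1) (hb : ‖b‖ = 1) (hy : a y = 0) :
    normalize (pushVec a b 1 y) = b := by
  have hyb : y + b ≠ 0 := fun h => by
    rw [eq_neg_of_add_eq_zero_left h, hab] at hy
    exact one_ne_zero hy
  rw [pushVec, hy, mul_zero, sub_self, add_zero, zero_smul, zero_add, one_mul,
    normalize_smul_of_pos (norm_pos_iff.2 hyb), normalize_eq_self_of_norm_eq_one hb]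

lemma normalize_pushVec_self (ha : ∀ y, 0 ≤ a y) (hb : ‖b‖ = 1) (ht : t ∈ I) :
    normalize (pushVec a b t b) = b := by
  have hbb : ‖b + b‖ = 2 := by rw [← two_smul ℝ b, norm_smul, hb]; norm_num
  have hpos : 0 < 1 - t + t * a b + t * 2 := by linarith [ht.1, ht.2, mul_nonneg ht.1 (ha b)]
  rw [pushVec, hbb, ← add_smul, normalize_smul_of_pos hpos, normalize_eq_self_of_norm_eq_one hb]

lemma pushVec_map (ρ : V ≃ₗᵢ[ℝ] V) (hρa : a (ρ y) = a y) (hρb : ρ b = b) :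
    pushVec a b t (ρ y) = ρ (pushVec a b t y) := by
  have hnorm : ‖ρ y + b‖ = ‖y + b‖ := by
    rw [← ρ.norm_map (y + b), map_add, hρb]
  simp only [pushVec, hρa, hnorm, map_add, map_smul, hρb]

/-- The deformation of the unit sphere obtained by normalizing `pushVec`. -/
def spherePush (a : C(V, ℝ)) (b : Metric.sphere (0 : V) 1) (ha : ∀ y, 0 ≤ a y)
    (hab : a (-b.1) = 1) : C(I × Metric.sphere (0 : V) 1, Metric.sphere (0 : V) 1) where
  toFun z := ⟨normalize (pushVec a b.1 z.1 z.2.1), mem_sphere_zero_iff_norm.2 <|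
    norm_normalize <| pushVec_ne_zero ha hab (mem_sphere_zero_iff_norm.1 b.2) z.1.2
      (mem_sphere_zero_iff_norm.1 z.2.2)⟩
  continuous_toFun := by
    have hcont : Continuous fun z : I × Metric.sphere (0 : V) 1 => pushVec a b.1 z.1 z.2.1 := by
      unfold pushVec
      fun_prop
    refine ((hcont.norm.inv₀ fun z => norm_ne_zero_iff.2 ?_).smul hcont).subtype_mk _
    exact pushVec_ne_zero ha hab (mem_sphere_zero_iff_norm.1 b.2) z.1.2
      (mem_sphere_zero_iff_norm.1 z.2.2)

variable {a : C(V, ℝ)} {b : Metric.sphere (0 : V) 1} {ha : ∀ y, 0 ≤ a y} {hab : a (-b.1) = 1}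

lemma spherePush_zero (y : Metric.sphere (0 : V) 1) : spherePush a b ha hab (0, y) = y := by
  refine Subtype.ext ?_
  simpa [spherePush, pushVec] using
    normalize_eq_self_of_norm_eq_one (mem_sphere_zero_iff_norm.1 y.2)

lemma spherePush_self (t : I) : spherePush a b ha hab (t, b) = b :=
  Subtype.ext (normalize_pushVec_self ha (mem_sphere_zero_iff_norm.1 b.2) t.2)

lemma spherePush_one_of_eq_zero {y : Metric.sphere (0 : V) 1} (hy : a y.1 = 0) :
    spherePush a b ha hab (1, y) = b :=
  Subtype.ext (normalize_pushVec_of_eq_zero hab (mem_sphere_zero_iff_norm.1 b.2) hy)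

lemma coe_spherePush_of_map (ρ : V ≃ₗᵢ[ℝ] V) (hρa : ∀ y, a (ρ y) = a y) (hρb : ρ b.1 = b.1)
    {t : I} {y y' : Metric.sphere (0 : V) 1} (h : y'.1 = ρ y.1) :
    (spherePush a b ha hab (t, y')).1 = ρ (spherePush a b ha hab (t, y)).1 := by
  change NormedSpace.normalize (pushVec a b.1 t y'.1) =
    ρ (NormedSpace.normalize (pushVec a b.1 t y.1))
  rw [h, pushVec_map ρ (hρa _) hρb, NormedSpace.normalize, NormedSpace.normalize, ρ.norm_map,
    map_smul]

end SpherePush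

section SphereHomeomorph

open NormedSpace

variable {V W : Type*} [NormedAddCommGroup V] [NormedSpace ℝ V] [NormedAddCommGroup W]
  [NormedSpace ℝ W]

lemma normalize_map_normalize (L : V →ₗ[ℝ] W) {x : V} (hx : x ≠ 0) :
    normalize (L (normalize x)) = normalize (L x) := by
  change NormedSpace.normalize (L (‖x‖⁻¹ • x)) = NormedSpace.normalize (L x)
  rw [map_smul, normalize_smul_of_pos (inv_pos.2 (norm_pos_iff.2 hx))]

/-- The map of unit spheres induced by a linear isomorphism. -/
def sphereMap (L : V ≃L[ℝ] W) : C(Metric.sphere (0 : V) 1, Metric.sphere (0 : W) 1) where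
  toFun x := ⟨normalize (L x.1), mem_sphere_zero_iff_norm.2 <| norm_normalize <|
    L.map_ne_zero_iff.2 (ne_zero_of_mem_unit_sphere x)⟩
  continuous_toFun := by
    have hcont : Continuous fun x : Metric.sphere (0 : V) 1 => L x.1 := by fun_prop
    exact ((hcont.norm.inv₀ fun x => norm_ne_zero_iff.2 <|
      L.map_ne_zero_iff.2 (ne_zero_of_mem_unit_sphere x)).smul hcont).subtype_mk _

lemma sphereMap_symm_sphereMap (L : V ≃L[ℝ] W) (x : Metric.sphere (0 : V) 1) :
    sphereMap L.symm (sphereMap L x) = x := by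
  have hLx : L x.1 ≠ 0 := L.map_ne_zero_iff.2 (ne_zero_of_mem_unit_sphere x)
  refine Subtype.ext ((normalize_map_normalize L.symm.toLinearMap hLx).trans ?_)
  simpa using normalize_eq_self_of_norm_eq_one (mem_sphere_zero_iff_norm.1 x.2)

lemma exists_sphere_homeomorph_apply_eq [FiniteDimensional ℝ V] [FiniteDimensional ℝ W]
    (h : Module.finrank ℝ V = Module.finrank ℝ W) (v : Metric.sphere (0 : V) 1)
    (w : Metric.sphere (0 : W) 1) :
    ∃ e : Metric.sphere (0 : V) 1 ≃ₜ Metric.sphere (0 : W) 1, e v = w := by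
  let L₀ : V ≃L[ℝ] W := .ofFinrankEq h
  obtain ⟨A, hA⟩ := SeparatingDual.exists_continuousLinearEquiv_apply_eq (R := ℝ)
    (L₀.map_ne_zero_iff.2 (ne_zero_of_mem_unit_sphere v)) (ne_zero_of_mem_unit_sphere w)
  let L := L₀.trans A
  refine ⟨⟨⟨sphereMap L, sphereMap L.symm, sphereMap_symm_sphereMap L,
    sphereMap_symm_sphereMap L.symm⟩, (sphereMap L).continuous, (sphereMap L.symm).continuous⟩,
    Subtype.ext ?_⟩
  exact (congrArg NormedSpace.normalize hA).trans
    (normalize_eq_self_of_norm_eq_one (mem_sphere_zero_iff_norm.1 w.2))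

end SphereHomeomorph

section Legs

open Z2Cone

/-- The parametrisation of the union of two legs of the tripod by the real line. The negative
half-line goes to the third leg, and the positive half-line to the first or the second leg. -/
def tripodLeg (δ : Bool) (s : ℝ) : Tripod :=
  if δ then ⟨(s, min s 0), .inr rfl⟩ else ⟨(min s 0, s), .inl rfl⟩

@[fun_prop]
lemma continuous_tripodLeg (δ : Bool) : Continuous (tripodLeg δ) := by
  cases δ <;> exact Continuous.subtype_mk (by fun_prop) _

lemma tripodLeg_eq_tripodLeg {δ δ' : Bool} {s s' : ℝ} :
    tripodLeg δ s = tripodLeg δ' s' ↔ s = s' ∧ (δ = δ' ∨ s ≤ 0) := by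
  cases δ <;> cases δ' <;>
    simp only [tripodLeg, Subtype.mk.injEq, Prod.mk.injEq, if_true, Bool.false_eq_true,
      if_false] <;> grind

lemma exists_tripodLeg_eq (p : Tripod) : ∃ δ s, tripodLeg δ s = p := by
  obtain ⟨⟨a, b⟩, h | h⟩ := p
  · exact ⟨false, b, Subtype.ext (Prod.ext h.symm rfl)⟩
  · exact ⟨true, a, Subtype.ext (Prod.ext rfl h.symm)⟩

lemma nnnorm_coe_tripodLeg (δ : Bool) (s : ℝ) : ‖(tripodLeg δ s).1‖₊ = ‖s‖₊ := by
  have h : |min s 0| ≤ |s| := by grind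
  cases δ
  · exact NNReal.eq (max_eq_right h)
  · exact NNReal.eq (max_eq_left h)

lemma inv_tripodLeg (δ : Bool) (s : ℝ) : tripod.inv (tripodLeg δ s) = tripodLeg (!δ) s := by
  cases δ <;> rfl

end Legs

section TripodPower

open Z2Cone

/-- The linear space whose unit spheres form the pieces of the wedge. -/
abbrev LegSpace (ι E : Type) : Type := (ι → ℝ) × (E × E)

variable {ι E : Type}

/-- The vector with coordinates `y` along the legs chosen by `δ`. -/
def legVec (δ : ι → Bool) (y : LegSpace ι E) : (ι → Tripod) × (E × E) :=
  (fun i => tripodLeg (δ i) (y.1 i), y.2)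

lemma legVec_eq_legVec {δ δ' : ι → Bool} {y y' : LegSpace ι E} :
    legVec δ y = legVec δ' y' ↔ y = y' ∧ ∀ i, δ i = δ' i ∨ y.1 i ≤ 0 := by
  simp only [legVec, Prod.ext_iff (x := y), Prod.mk.injEq, funext_iff, tripodLeg_eq_tripodLeg,
    forall_and]
  tauto

lemma exists_legVec_eq (p : (ι → Tripod) × (E × E)) : ∃ δ y, legVec δ y = p := by
  choose δ s h using fun i => exists_tripodLeg_eq (p.1 i)
  exact ⟨δ, (s, p.2), Prod.ext (funext h) rfl⟩

variable [NormedAddCommGroup E]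

/-- The inclusion of the cone `(tripod.pow ι).prod (swapSquare E)` in a vector space. -/
def tripodPowVec : C((ι → Tripod) × (E × E), (ι → ℝ × ℝ) × (E × E)) where
  toFun p := (fun i => (p.1 i).1, p.2)

lemma tripodPowVec_injective : Function.Injective (tripodPowVec (ι := ι) (E := E)) := fun _ _ h =>
  Prod.ext (funext fun i => Subtype.ext (congrFun (congrArg Prod.fst h) i))
    (congrArg Prod.snd h :)

lemma norm_tripodPowVec_legVec [Fintype ι] (δ : ι → Bool) (y : LegSpace ι E) :
    ‖tripodPowVec (legVec δ y)‖ = ‖y‖ := by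
  have hfst : ‖fun i => (tripodLeg (δ i) (y.1 i)).1‖ = ‖y.1‖ := by
    simp only [Pi.norm_def, nnnorm_coe_tripodLeg]
  exact congrArg (max · ‖y.2‖) hfst

variable [NormedSpace ℝ E]

/-- Multiplication by nonnegative scalars on `(tripod.pow ι).prod (swapSquare E)`. -/
def tripodPowScale : C(NNReal × ((ι → Tripod) × (E × E)), (ι → Tripod) × (E × E)) where
  toFun a := (fun i => ⟨(a.1 : ℝ) • (a.2.1 i).1, (a.2.1 i).2.imp
    (fun h => by simp [h, mul_min_of_nonneg]) fun h => by simp [h, mul_min_of_nonneg]⟩,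
    (a.1 : ℝ) • a.2.2)
  continuous_toFun := by fun_prop

lemma tripodPowVec_tripodPowScale (c : NNReal) (p : (ι → Tripod) × (E × E)) :
    tripodPowVec (tripodPowScale (c, p)) = (c : ℝ) • tripodPowVec p :=
  rfl

variable [Fintype ι]

variable (ι E) in
/-- The supremum norm, as a gauge. -/
def tripodPowGauge : Gauge ((tripod.pow ι).prod (swapSquare E)) where
  scale := tripodPowScale
  norm := ⟨fun p => ‖tripodPowVec p‖₊, tripodPowVec.continuous.nnnorm⟩
  scale_one p := tripodPowVec_injective (one_smul ℝ (tripodPowVec p))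
  scale_inv _ _ := rfl
  norm_scale c p := (congrArg nnnorm (tripodPowVec_tripodPowScale c p)).trans <| by
    rw [nnnorm_smul, NNReal.nnnorm_eq]
    rfl
  norm_inv := fun p : (ι → Tripod) × (E × E) => congrArg₂ max
    (congrArg univ.sup (funext fun i => max_comm ‖(p.1 i).1.2‖₊ ‖(p.1 i).1.1‖₊))
    (max_comm ‖p.2.2‖₊ ‖p.2.1‖₊)
  norm_eq_zero p := nnnorm_eq_zero.trans (tripodPowVec_injective.eq_iff' rfl)

/-- The piece of the link of `(tripod.pow ι).prod (swapSquare E)` along the legs chosen by `δ`. -/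
def legPoint (δ : ι → Bool) (y : Metric.sphere (0 : LegSpace ι E) 1) : (tripodPowGauge ι E).Link :=
  ⟨legVec δ y.1, NNReal.eq <|
    (norm_tripodPowVec_legVec δ y.1).trans (mem_sphere_zero_iff_norm.1 y.2)⟩

lemma continuous_legPoint (δ : ι → Bool) : Continuous (legPoint (E := E) δ) :=
  (show Continuous fun y : Metric.sphere (0 : LegSpace ι E) 1 => legVec δ y.1 by
    unfold legVec; fun_prop).subtype_mk _

lemma legPoint_eq_legPoint {δ δ' : ι → Bool} {y y' : Metric.sphere (0 : LegSpace ι E) 1} :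
    legPoint δ y = legPoint δ' y' ↔ y = y' ∧ ∀ i, δ i = δ' i ∨ y.1.1 i ≤ 0 := by
  rw [Subtype.ext_iff (a1 := y)]
  exact Subtype.ext_iff.trans legVec_eq_legVec

lemma exists_legPoint_eq (p : (tripodPowGauge ι E).Link) : ∃ δ y, legPoint δ y = p := by
  obtain ⟨δ, y, h⟩ := exists_legVec_eq p.1
  have hy : ‖y‖ = 1 := by
    rw [← norm_tripodPowVec_legVec δ, h]
    exact congrArg NNReal.toReal p.2
  exact ⟨δ, ⟨y, mem_sphere_zero_iff_norm.2 hy⟩, Subtype.ext h⟩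

variable (ι E) in
/-- The exchange of the two components of `E × E`, as an isometry of `LegSpace ι E`. -/
def legSwap : LegSpace ι E ≃ₗᵢ[ℝ] LegSpace ι E where
  toLinearEquiv := (LinearEquiv.refl ℝ (ι → ℝ)).prodCongr (LinearEquiv.prodComm ℝ E E)
  norm_map' y := congrArg (max ‖y.1‖) (max_comm ‖y.2.2‖ ‖y.2.1‖)

/-- The exchange of the two components of `E × E`, on the unit sphere. -/
def legSphereSwap (y : Metric.sphere (0 : LegSpace ι E) 1) : Metric.sphere (0 : LegSpace ι E) 1 :=
  ⟨legSwap ι E y.1, by simp⟩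

lemma linkInv_legPoint (δ : ι → Bool) (y : Metric.sphere (0 : LegSpace ι E) 1) :
    (tripodPowGauge ι E).linkInv (legPoint δ y) =
      legPoint (fun i => !(δ i)) (legSphereSwap y) :=
  Subtype.ext (Prod.ext (funext fun i => inv_tripodLeg (δ i) (y.1.1 i)) rfl)

end TripodPower

section LegPush

variable {ι E : Type} [Fintype ι] [Nonempty ι] [NormedAddCommGroup E]

variable (ι E) in
/-- The point of the unit sphere whose coordinates all lie on the third leg. -/
def legBase : Metric.sphere (0 : LegSpace ι E) 1 :=
  ⟨(fun _ => -1, 0), by simp [Prod.norm_def]⟩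

/-- The least coordinate along the legs, cut off at zero. It vanishes where pieces of the link
meet. -/
def legMin : C(LegSpace ι E, ℝ) where
  toFun y := max (univ.inf' univ_nonempty y.1) 0
  continuous_toFun :=
    (Continuous.finset_inf'_apply _ fun i _ => by fun_prop).max continuous_const

lemma legMin_nonneg (y : LegSpace ι E) : 0 ≤ legMin y :=
  le_max_right _ _

lemma legMin_neg_legBase : legMin (-(legBase ι E).1) = 1 := by
  simp [legMin, legBase]

lemma legMin_eq_zero {y : LegSpace ι E} {i : ι} (hi : y.1 i ≤ 0) : legMin y = 0 :=
  max_eq_right ((inf'_le _ (mem_univ i)).trans hi)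

variable [NormedSpace ℝ E]

/-- The deformation of the unit sphere that moves all points with a nonpositive coordinate along
the legs to the base point. -/
def legPush : C(I × Metric.sphere (0 : LegSpace ι E) 1, Metric.sphere (0 : LegSpace ι E) 1) :=
  spherePush legMin (legBase ι E) legMin_nonneg legMin_neg_legBase

lemma legPush_one {y : Metric.sphere (0 : LegSpace ι E) 1} {i : ι} (hi : y.1.1 i ≤ 0) :
    legPush (1, y) = legBase ι E :=
  spherePush_one_of_eq_zero (legMin_eq_zero hi)

lemma legPush_nonpos (t : I) {y : Metric.sphere (0 : LegSpace ι E) 1} {i : ι}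
    (hi : y.1.1 i ≤ 0) : (legPush (t, y)).1.1 i ≤ 0 := by
  have hc : 0 ≤ 1 - (t : ℝ) + t * legMin y.1 :=
    add_nonneg (sub_nonneg.2 t.2.2) (mul_nonneg t.2.1 (legMin_nonneg _))
  have hμ : 0 ≤ (t : ℝ) * ‖y.1 + (legBase ι E).1‖ := mul_nonneg t.2.1 (norm_nonneg _)
  refine mul_nonpos_of_nonneg_of_nonpos (inv_nonneg.2 (norm_nonneg _)) ?_
  exact add_nonpos (mul_nonpos_of_nonneg_of_nonpos hc hi)
    (mul_nonpos_of_nonneg_of_nonpos hμ (neg_nonpos.2 zero_le_one))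

lemma legPush_legSphereSwap (t : I) (y : Metric.sphere (0 : LegSpace ι E) 1) :
    legPush (t, legSphereSwap y) = legSphereSwap (legPush (t, y)) :=
  Subtype.ext (coe_spherePush_of_map (legSwap ι E) (fun _ => rfl) rfl rfl)

lemma legPoint_legPush_eq (t : I) {δ δ' : ι → Bool} {y y' : Metric.sphere (0 : LegSpace ι E) 1}
    (h : legPoint δ y = legPoint δ' y') :
    legPoint δ (legPush (t, y)) = legPoint δ' (legPush (t, y')) := by
  obtain ⟨rfl, hδ⟩ := legPoint_eq_legPoint.1 h
  exact legPoint_eq_legPoint.2 ⟨rfl, fun i => (hδ i).imp_right (legPush_nonpos t)⟩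

end LegPush

section Wedge

open Z2Cone

variable {d n m : ℕ} {J S E : Type} [TopologicalSpace J] [DiscreteTopology J] [TopologicalSpace S]

/-- The quotient map onto the wedge that sends the piece with label `j` to the sphere with label
`e j`. -/
def wedgeMk (e : J ≃ Fin n) (h : S ≃ₜ nSphere d) : C(J × S, WedgeOfSpheres n d) where
  toFun z := Quotient.mk _ (e z.1, h z.2)
  continuous_toFun := continuous_quotient_mk'.comp (by fun_prop)

lemma isQuotientMap_wedgeMk (e : J ≃ Fin n) (h : S ≃ₜ nSphere d) : IsQuotientMap (wedgeMk e h) :=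
  isQuotientMap_quotient_mk'.comp
    ((Homeomorph.mk e continuous_of_discreteTopology continuous_of_discreteTopology).prodCongr
      h).isQuotientMap

lemma wedgeMk_eq_wedgeMk {e : J ≃ Fin n} {h : S ≃ₜ nSphere d} {b : S} (hb : h b = northPole d)
    {z z' : J × S} : wedgeMk e h z = wedgeMk e h z' ↔ z = z' ∨ (z.2 = b ∧ z'.2 = b) := by
  refine Quotient.eq.trans (or_congr ?_ ?_)
  · exact ((e.injective.prodMap h.injective).eq_iff : _ ↔ z = z')
  · rw [← hb]
    exact and_congr h.injective.eq_iff h.injective.eq_iff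

variable [NormedAddCommGroup E] [NormedSpace ℝ E]

variable (m E) in
/-- The orbit space of the link is covered by the pieces that use the first leg in the coordinate
`0`. -/
def legMk : C((Fin m → Bool) × Metric.sphere (0 : LegSpace (Fin (m + 1)) E) 1,
    Z2Quotient _ (tripodPowGauge (Fin (m + 1)) E).linkInv Gauge.linkInv_linkInv) where
  toFun z := Z2Quotient.mk _ (legPoint (Fin.cons true z.1) z.2)
  continuous_toFun := continuous_prod_of_discrete_left.2 fun δ =>
    (Z2Quotient.mk _).continuous.comp (continuous_legPoint (Fin.cons true δ))

lemma legMk_eq_legMk {z z' : (Fin m → Bool) × Metric.sphere (0 : LegSpace (Fin (m + 1)) E) 1} :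
    legMk m E z = legMk m E z' ↔
      legPoint (Fin.cons true z'.1) z'.2 = legPoint (Fin.cons true z.1) z.2 ∨
      legPoint (Fin.cons true z'.1) z'.2 =
        legPoint (fun i => !(Fin.cons true z.1 : Fin (m + 1) → Bool) i) (legSphereSwap z.2) := by
  rw [← linkInv_legPoint]
  exact Z2Quotient.mk_eq_mk

lemma legMk_surjective : Function.Surjective (legMk m E) := by
  have hmem (δ : Fin (m + 1) → Bool) (hδ : δ 0 = true) (y) :
      legMk m E (Fin.tail δ, y) = Z2Quotient.mk _ (legPoint δ y) := by
    conv_rhs => rw [← Fin.cons_self_tail δ, hδ]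
    rfl
  intro u
  obtain ⟨p, rfl⟩ := Z2Quotient.isOpenQuotientMap_mk.surjective u
  obtain ⟨δ, y, rfl⟩ := exists_legPoint_eq p
  cases hδ : δ 0
  · refine ⟨_, (hmem (fun i => !(δ i)) (by simp [hδ]) (legSphereSwap y)).trans ?_⟩
    rw [← linkInv_legPoint]
    exact Z2Quotient.mk_eq_mk.2 (.inr (Gauge.linkInv_linkInv _).symm)
  · exact ⟨_, hmem δ hδ y⟩

lemma isQuotientMap_legMk [FiniteDimensional ℝ E] : IsQuotientMap (legMk m E) := by
  have : T2Space ((tripod.pow (Fin (m + 1))).prod (swapSquare E)) :=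
    inferInstanceAs (T2Space ((Fin (m + 1) → Tripod) × (E × E)))
  exact .of_surjective_continuous legMk_surjective (legMk m E).continuous

variable {z z' : (Fin m → Bool) × Metric.sphere (0 : LegSpace (Fin (m + 1)) E) 1}

lemma legMk_legPush_eq (t : I) (h : legMk m E z = legMk m E z') :
    legMk m E (z.1, legPush (t, z.2)) = legMk m E (z'.1, legPush (t, z'.2)) := by
  refine legMk_eq_legMk.2 ((legMk_eq_legMk.1 h).imp (legPoint_legPush_eq t) fun h => ?_)
  rw [← legPush_legSphereSwap]
  exact legPoint_legPush_eq t h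

lemma eq_or_legPush_one_of_legMk_eq (h : legMk m E z = legMk m E z') :
    z = z' ∨ legPush (1, z.2) = legBase _ E ∧ legPush (1, z'.2) = legBase _ E := by
  obtain ⟨δ, y⟩ := z
  obtain ⟨δ', y'⟩ := z'
  rcases legMk_eq_legMk.1 h with h | h
  · obtain ⟨rfl, hδ⟩ := legPoint_eq_legPoint.1 h
    by_cases hi : ∃ i, y'.1.1 i ≤ 0
    · obtain ⟨i, hi⟩ := hi
      exact .inr ⟨legPush_one hi, legPush_one hi⟩
    · push Not at hi
      refine .inl (Prod.ext (funext fun i => ?_) rfl)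
      simpa using ((hδ i.succ).resolve_right (hi _).not_ge).symm
  · obtain ⟨hy, hδ⟩ := legPoint_eq_legPoint.1 h
    have h0 : y'.1.1 0 ≤ 0 := (hδ 0).resolve_left (by simp)
    have h0' : y.1.1 0 ≤ 0 := by
      rwa [show y.1.1 0 = y'.1.1 0 from congrArg (·.1.1 0) hy.symm]
    exact .inr ⟨legPush_one h0', legPush_one h0⟩

lemma legMk_eq_of_snd_eq_legBase (hz : z.2 = legBase _ E) (hz' : z'.2 = legBase _ E) :
    legMk m E z = legMk m E z' :=
  legMk_eq_legMk.2 <| .inl <| legPoint_eq_legPoint.2 ⟨hz'.trans hz.symm, fun i => .inr <| by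
    rw [hz']
    exact neg_nonpos.2 zero_le_one⟩

variable [FiniteDimensional ℝ E]

lemma nonempty_homotopyEquiv_tripodPowLink_wedge (e : (Fin m → Bool) ≃ Fin n)
    (h : Metric.sphere (0 : LegSpace (Fin (m + 1)) E) 1 ≃ₜ nSphere d)
    (hb : h (legBase _ E) = northPole d) :
    Nonempty (ContinuousMap.HomotopyEquiv
      (Z2Quotient _ (tripodPowGauge (Fin (m + 1)) E).linkInv Gauge.linkInv_linkInv)
      (WedgeOfSpheres n d)) := by
  let H : C(I × ((Fin m → Bool) × Metric.sphere (0 : LegSpace (Fin (m + 1)) E) 1), _) :=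
    ⟨fun a => (a.2.1, legPush (a.1, a.2.2)), by fun_prop⟩
  have hp {z z'} := wedgeMk_eq_wedgeMk (e := e) hb (z := z) (z' := z')
  have hHp (t : I) (z z') (hz : wedgeMk e h z = wedgeMk e h z') :
      wedgeMk e h (H (t, z)) = wedgeMk e h (H (t, z')) :=
    hp.2 <| (hp.1 hz).imp (congrArg fun z => H (t, z)) <| And.imp
      (fun hz => (congrArg (fun y => legPush (t, y)) hz).trans (spherePush_self t))
      fun hz => (congrArg (fun y => legPush (t, y)) hz).trans (spherePush_self t)
  exact nonempty_homotopyEquiv_of_isQuotientMap (φ := ⟨fun z => H (1, z), by fun_prop⟩)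
    isQuotientMap_legMk (isQuotientMap_wedgeMk e h)
    ⟨H, fun z => Prod.ext rfl (spherePush_zero z.2), fun _ => rfl⟩
    (fun t _ _ => legMk_legPush_eq t) hHp
    (fun _ _ hz => hp.2 ((eq_or_legPush_one_of_legMk_eq hz).imp_left (congrArg fun z => H (1, z))))
    fun _ _ hz => legMk_legPush_eq 1 <| (hp.1 hz).elim (congrArg _) fun hz =>
      legMk_eq_of_snd_eq_legBase hz.1 hz.2

lemma nonempty_homotopyEquiv_tripodPow_wedge
    (hE : Module.finrank ℝ (LegSpace (Fin (m + 1)) E) = d + 1) :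
    Nonempty (ContinuousMap.HomotopyEquiv
      ((tripod.pow (Fin (m + 1))).prod (swapSquare E)).PuncturedQuotient
      (WedgeOfSpheres (2 ^ m) d)) := by
  obtain ⟨e₁⟩ := (tripodPowGauge (Fin (m + 1)) E).nonempty_homotopyEquiv_puncturedQuotient_link
  obtain ⟨h, hb⟩ := exists_sphere_homeomorph_apply_eq
    (hE.trans (finrank_euclideanSpace_fin (𝕜 := ℝ)).symm) (legBase _ E) (northPole d)
  obtain ⟨e₂⟩ := nonempty_homotopyEquiv_tripodPowLink_wedge
    (Fintype.equivFinOfCardEq (by simp) : (Fin m → Bool) ≃ Fin (2 ^ m)) h hb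
  exact ⟨e₁.trans e₂⟩

end Wedge

section HomPlusQuotient

open Z2Cone

/-- The orbit space of `Hom₊(C_{2r+1}, K_n)` under the reflection of the cycle. -/
abbrev CycleHomPlusQuotient (r n : ℕ) : Type :=
  Z2Quotient (HomPlus (oddCycle r) (completeGraph n))
    (precompHomPlus (cycleReflect r) (cycleReflect_bijective r) (completeGraph n))
    (precompHomPlus_invol (cycleReflect r) (cycleReflect_bijective r)
      (cycleReflect_invol r) (completeGraph n))

variable {r : ℕ} {A : Z2Cone} (n : ℕ)

lemma nonempty_homotopyEquiv_cycleHomPlusQuotient (h : ConeEquiv (pathCone r) A) :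
    Nonempty (ContinuousMap.HomotopyEquiv (CycleHomPlusQuotient r n)
      (A.pow (Fin n)).PuncturedQuotient) := by
  obtain ⟨e₁⟩ := nonempty_homotopyEquiv_homPlus n (cycleReflect_invol r) (cycleReflect_bijective r)
  obtain ⟨e₂⟩ := (((coneEquiv_indCone_oddCycle r).trans h).pow
    (Fin n)).nonempty_homotopyEquiv_puncturedQuotient
  exact ⟨e₁.trans e₂⟩

variable {n} {d j : ℕ}

lemma nonempty_homotopyEquiv_cycleHomPlusQuotient_wedge {m : ℕ}
    (hd : d + 1 = (m + 1) * (2 * j + 1)) :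
    Nonempty (ContinuousMap.HomotopyEquiv (CycleHomPlusQuotient (3 * j + 1) (m + 1))
      (WedgeOfSpheres (2 ^ m) d)) := by
  obtain ⟨e₁⟩ := nonempty_homotopyEquiv_cycleHomPlusQuotient (m + 1)
    (coneEquiv_pathCone_three_mul_add_one j)
  have hcone := (coneEquiv_pow_prod tripod (swapSquare (Fin j → ℝ)) (Fin (m + 1))).trans
    ((ConeEquiv.refl _).prod (coneEquiv_swapSquare_pow _ _))
  obtain ⟨e₂⟩ := hcone.nonempty_homotopyEquiv_puncturedQuotient
  have hrank : Module.finrank ℝ (LegSpace (Fin (m + 1)) (Fin (m + 1) → Fin j → ℝ)) = d + 1 := by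
    simp only [Module.finrank_prod, Module.finrank_pi_fintype, Module.finrank_self, sum_const,
      card_univ, Fintype.card_fin, smul_eq_mul, hd]
    ring
  obtain ⟨e₃⟩ := nonempty_homotopyEquiv_tripodPow_wedge hrank
  exact ⟨(e₁.trans e₂).trans e₃⟩

lemma nonempty_homotopyEquiv_cycleHomPlusQuotient_topJoin
    (h : ConeEquiv (pathCone r) (swapSquare (Fin j → ℝ))) (hd : d + 1 = j * n) :
    Nonempty (ContinuousMap.HomotopyEquiv (CycleHomPlusQuotient r n)
      (TopJoin (nSphere d) (RPspace d))) := by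
  obtain ⟨e₁⟩ := nonempty_homotopyEquiv_cycleHomPlusQuotient n h
  obtain ⟨e₂⟩ := (coneEquiv_swapSquare_pow (Fin j → ℝ)
    (Fin n)).nonempty_homotopyEquiv_puncturedQuotient
  have hrank : Module.finrank ℝ (Fin n → Fin j → ℝ) = d + 1 := by
    simp only [Module.finrank_pi_fintype, Module.finrank_self, sum_const, card_univ,
      Fintype.card_fin, smul_eq_mul, mul_one, hd, mul_comm]
  obtain ⟨e₃⟩ := nonempty_homotopyEquiv_swapSquare_topJoin hrank
  exact ⟨(e₁.trans e₂).trans e₃⟩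

end HomPlusQuotient

/-- The homotopy type of `Hom₊(C_{2r+1},K_n)/ℤ₂` for the `ℤ/2`-action induced by the
reflection of the cycle: a wedge of `2^{n-1}` copies of `S^{nk-1}` if `2r+1 = 3k`, and the join
`S^{kn/2-1} * ℝP^{kn/2-1}` if `2r+1 = 3k ± 1`. -/
theorem homPlus_quotient_homotopy_type (r n k : ℕ) (hr : 1 ≤ r) (hn : 1 ≤ n) :
    (2 * r + 1 = 3 * k → Nonempty (ContinuousMap.HomotopyEquiv
        (Z2Quotient (HomPlus (oddCycle r) (completeGraph n))
          (precompHomPlus (cycleReflect r) (cycleReflect_bijective r) (completeGraph n))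
          (precompHomPlus_invol (cycleReflect r) (cycleReflect_bijective r)
            (cycleReflect_invol r) (completeGraph n)))
        (WedgeOfSpheres (2 ^ (n - 1)) (n * k - 1)))) ∧
    ((2 * r + 1 = 3 * k + 1 ∨ 2 * r + 1 = 3 * k - 1) →
      Nonempty (ContinuousMap.HomotopyEquiv
        (Z2Quotient (HomPlus (oddCycle r) (completeGraph n))
          (precompHomPlus (cycleReflect r) (cycleReflect_bijective r) (completeGraph n))
          (precompHomPlus_invol (cycleReflect r) (cycleReflect_bijective r)
            (cycleReflect_invol r) (completeGraph n)))
        (TopJoin (nSphere (k * n / 2 - 1)) (RPspace (k * n / 2 - 1))))) := by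
  obtain ⟨m, rfl⟩ : ∃ m, n = m + 1 := ⟨n - 1, by lia⟩
  constructor
  · intro h
    obtain ⟨j, rfl, rfl⟩ : ∃ j, k = 2 * j + 1 ∧ r = 3 * j + 1 := ⟨k / 2, by lia, by lia⟩
    exact nonempty_homotopyEquiv_cycleHomPlusQuotient_wedge
      (Nat.sub_add_cancel (Nat.mul_pos hn (Nat.succ_pos _)))
  · intro h
    obtain ⟨j, rfl⟩ : ∃ j, k = 2 * (j + 1) := ⟨k / 2 - 1, by lia⟩
    have hdiv : 2 * (j + 1) * (m + 1) / 2 = (j + 1) * (m + 1) := by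
      rw [mul_assoc, Nat.mul_div_cancel_left _ two_pos]
    rw [hdiv]
    refine nonempty_homotopyEquiv_cycleHomPlusQuotient_topJoin ?_
      (Nat.sub_add_cancel (Nat.mul_pos j.succ_pos hn))
    rcases h with h | h
    · obtain rfl : r = 3 * j + 3 := by lia
      exact coneEquiv_pathCone_three_mul_add_three j
    · obtain rfl : r = 3 * j + 2 := by lia
      exact coneEquiv_pathCone_three_mul_add_two j

end Lovasz
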